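/- arXiv:1811.04501 — 4 statements merged into one kernel-verified Lean document; each statement's English description precedes it below -/
import Mathlib

section
/- Let f : ℝ → ℂ be 2π-periodic and continuously differentiable. Suppose there is a finite set F ⊂ [0,2π] such that f is twice differentiable on ℝ ∖ (F + 2πℤ) and the second derivative f'' agrees, off F + 2πℤ, with a 2π-periodic function that has bounded variation on [0,2π]. Then for every real s < 5/2 one has ∑_{k∈ℤ} (1+k²)^s |f̂_k|² < ∞. -/
open scoped ENNReal Real

/-!
For `f` of period `T`, integrating by parts twice gives
`‖f̂ₖ‖ = (T / 2π|k|)² ‖(f'')̂ₖ‖`; the exceptional set is countable and `f`, `f'` are continuous, so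
neither integration sees it. The character of frequency `k` has mean zero over each of the `|k|`
subintervals of length `T / |k|`, so on each of them `f''` may be replaced by its difference from a
constant, which is at most its variation there; summing, `‖(f'')̂ₖ‖ ≤ Var(f'') / |k|`. Hence
`f̂ₖ = O(|k|⁻³)`, and `(1 + k²)ˢ |f̂ₖ|² = O(|k|^(2s - 6))` is summable as soon as `s < 5/2`.
-/

open Set MeasureTheory Filter Asymptotics Function

section BoundedVariation

lemma lipschitzOnWith_one_of_hasUnitSpeedOn {E : Type*} [PseudoEMetricSpace E] {γ : ℝ → E}
    {s : Set ℝ} (hγ : HasUnitSpeedOn γ s) : LipschitzOnWith 1 γ s := by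
  intro x hx y hy
  wlog hxy : x ≤ y generalizing x y
  · simpa only [edist_comm] using this hy hx (le_of_not_ge hxy)
  calc edist (γ x) (γ y) ≤ eVariationOn γ (s ∩ Icc x y) :=
        eVariationOn.edist_le γ ⟨hx, le_rfl, hxy⟩ ⟨hy, hxy, le_rfl⟩
    _ = (1 : NNReal) * edist x y := by
        rw [hγ hx hy, NNReal.coe_one, one_mul, ENNReal.coe_one, one_mul, edist_comm, edist_dist,
          Real.dist_eq, abs_of_nonneg (sub_nonneg.2 hxy)]

-- `h` factors as its monotone arc-length function followed by the unit-speed parameterization,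
-- which is continuous on a subset of `ℝ` and therefore has separable range.
lemma stronglyMeasurable_domRestrict_of_locallyBoundedVariationOn {E : Type*} [MetricSpace E]
    {h : ℝ → E} {s : Set ℝ} (hh : LocallyBoundedVariationOn h s) :
    StronglyMeasurable (s.domRestrict h) := by
  rcases s.eq_empty_or_nonempty with rfl | ⟨a, ha⟩
  · exact .of_subsingleton_dom
  set ℓ : ℝ → ℝ := variationOnFromTo h s a
  have hℓ : Measurable (s.domRestrict ℓ) :=
    (monotoneOn_iff_monotone.1 (variationOnFromTo.monotoneOn hh ha)).measurable
  have hγ : ContinuousOn (naturalParameterization h s a) (ℓ '' s) :=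
    (lipschitzOnWith_one_of_hasUnitSpeedOn
      (has_unit_speed_naturalParameterization h hh ha)).continuousOn
  have hcomp : s.domRestrict h = (ℓ '' s).domRestrict (naturalParameterization h s a) ∘
      fun x : s ↦ ⟨ℓ x, mem_image_of_mem ℓ x.2⟩ :=
    funext fun x ↦ (edist_eq_zero.1 (edist_naturalParameterization_eq_zero hh ha x.2)).symm
  rw [hcomp]
  exact hγ.domRestrict.stronglyMeasurable.comp_measurable hℓ.subtype_mk

variable {E : Type*} [NormedAddCommGroup E] {h : ℝ → E} {a b : ℝ}

lemma intervalIntegrable_of_boundedVariationOn (hab : a ≤ b)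
    (hh : BoundedVariationOn h (Icc a b)) : IntervalIntegrable h volume a b := by
  rw [intervalIntegrable_iff_integrableOn_Icc_of_le hab]
  have hmeas : AEStronglyMeasurable h (volume.restrict (Icc a b)) := by
    rw [← map_comap_subtype_coe measurableSet_Icc,
      (MeasurableEmbedding.subtype_coe measurableSet_Icc).aestronglyMeasurable_map_iff]
    exact (stronglyMeasurable_domRestrict_of_locallyBoundedVariationOn
      hh.locallyBoundedVariationOn).aestronglyMeasurable
  refine Integrable.of_bound hmeas (‖h a‖ + (eVariationOn h (Icc a b)).toReal) ?_
  filter_upwards [ae_restrict_mem measurableSet_Icc] with x hx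
  have hdist := hh.dist_le hx (left_mem_Icc.2 hab)
  rw [dist_eq_norm] at hdist
  linarith [norm_sub_norm_le (h x) (h a)]

variable [NormedSpace ℂ E] [CompleteSpace E] {e : ℝ → ℂ} {C : ℝ}

lemma norm_integral_smul_le_of_integral_eq_zero (hab : a ≤ b) (he : ContinuousOn e (Icc a b))
    (heC : ∀ x ∈ Icc a b, ‖e x‖ ≤ C) (hzero : ∫ x in a..b, e x = 0)
    (hh : BoundedVariationOn h (Icc a b)) :
    ‖∫ x in a..b, e x • h x‖ ≤ (b - a) * C * (eVariationOn h (Icc a b)).toReal := by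
  rw [← uIcc_of_le hab] at he
  have hsub : ∫ x in a..b, e x • h x = ∫ x in a..b, e x • (h x - h a) := by
    have heh : IntervalIntegrable (fun x ↦ e x • h x) volume a b :=
      (intervalIntegrable_of_boundedVariationOn hab hh).continuousOn_smul he
    have hea : IntervalIntegrable (fun x ↦ e x • h a) volume a b :=
      (he.smul continuousOn_const).intervalIntegrable
    simp only [smul_sub]
    rw [intervalIntegral.integral_sub heh hea, intervalIntegral.integral_smul_const, hzero,
      zero_smul, sub_zero]
  rw [hsub, mul_assoc, mul_comm, ← abs_of_nonneg (sub_nonneg.2 hab)]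
  refine intervalIntegral.norm_integral_le_of_norm_le_const fun x hx ↦ ?_
  rw [uIoc_of_le hab] at hx
  have hx := Ioc_subset_Icc_self hx
  rw [norm_smul, ← dist_eq_norm]
  exact mul_le_mul (heC x hx) (hh.dist_le hx (left_mem_Icc.2 hab)) dist_nonneg
    ((norm_nonneg _).trans (heC x hx))

lemma norm_integral_smul_le_of_periodic_of_integral_eq_zero {τ : ℝ} (hτ : 0 ≤ τ)
    (he : Continuous e) (heC : ∀ x, ‖e x‖ ≤ C) (hper : Periodic e τ)
    (hzero : ∫ x in 0..τ, e x = 0) {n : ℕ} (hh : BoundedVariationOn h (Icc a (a + n * τ))) :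
    ‖∫ x in a..(a + n * τ), e x • h x‖ ≤
      τ * C * (eVariationOn h (Icc a (a + n * τ))).toReal := by
  set t : ℕ → ℝ := fun j ↦ a + j * τ with ht
  have ht_zero : t 0 = a := by simp [ht]
  have ht_succ (j : ℕ) : t (j + 1) = t j + τ := by simp only [ht]; push_cast; ring
  have ht_mono : Monotone t := monotone_nat_of_le_succ fun j ↦ by linarith [ht_succ j]
  have hbv {j : ℕ} (hj : j < n) : BoundedVariationOn h (Icc (t j) (t (j + 1))) :=
    hh.mono (Icc_subset_Icc (ht_zero ▸ ht_mono j.zero_le) (ht_mono hj))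
  have hint (j : ℕ) (hj : j < n) :
      IntervalIntegrable (fun x ↦ e x • h x) volume (t j) (t (j + 1)) :=
    (intervalIntegrable_of_boundedVariationOn (ht_mono j.le_succ) (hbv hj)).continuousOn_smul
      he.continuousOn
  have hpiece (j : ℕ) (hj : j ∈ Finset.range n) : ‖∫ x in (t j)..(t (j + 1)), e x • h x‖ ≤
      τ * C * (eVariationOn h (Icc (t j) (t (j + 1)))).toReal := by
    have hmean : ∫ x in (t j)..(t (j + 1)), e x = 0 := by
      rw [ht_succ, hper.intervalIntegral_add_eq (t j) 0, zero_add, hzero]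
    have hle := norm_integral_smul_le_of_integral_eq_zero (ht_mono j.le_succ) he.continuousOn
      (fun x _ ↦ heC x) hmean (hbv (Finset.mem_range.1 hj))
    rwa [sub_eq_of_eq_add' (ht_succ j)] at hle
  calc ‖∫ x in a..t n, e x • h x‖
      = ‖∑ j ∈ Finset.range n, ∫ x in (t j)..(t (j + 1)), e x • h x‖ := by
        rw [intervalIntegral.sum_integral_adjacent_intervals hint, ht_zero]
    _ ≤ ∑ j ∈ Finset.range n, τ * C * (eVariationOn h (Icc (t j) (t (j + 1)))).toReal :=
        norm_sum_le_of_le _ hpiece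
    _ = τ * C * (eVariationOn h (Icc a (t n))).toReal := by
        rw [← Finset.mul_sum, ← ENNReal.toReal_sum fun j hj ↦ hbv (Finset.mem_range.1 hj),
          eVariationOn.sum' h ht_mono, ht_zero]

end BoundedVariation

section Periodic

variable {E : Type*} [NormedAddCommGroup E] [NormedSpace ℝ E] {f : ℝ → E} {c : ℝ}

lemma periodic_deriv (hf : Periodic f c) : Periodic (deriv f) c := fun x ↦ by
  rw [← deriv_comp_add_const, hf.funext]

lemma integral_eq_zero_of_antiperiodic (hf : Antiperiodic f c) (a : ℝ) :
    ∫ x in a..(a + 2 * c), f x = 0 := by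
  have hneg : ∫ x in (a + c)..(a + c + 2 * c), f x = -∫ x in a..(a + 2 * c), f x := by
    rw [add_right_comm, ← intervalIntegral.integral_comp_add_right f c, hf.funext,
      ← intervalIntegral.integral_neg]
    rfl
  rw [hf.periodic_two_mul.intervalIntegral_add_eq (a + c) a] at hneg
  have := IsAddTorsionFree.of_isTorsionFree ℝ E
  exact self_eq_neg.1 hneg

lemma antiperiodic_fourier {T : ℝ} (hT : 0 < T) {n : ℤ} (hn : n ≠ 0) :
    Antiperiodic (fun x : ℝ ↦ fourier n (x : AddCircle T)) (T / 2 / |(n : ℝ)|) := by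
  have hshift : Antiperiodic (fun x : ℝ ↦ fourier n (x : AddCircle T)) (T / 2 / n) := fun x ↦ by
    simpa only [AddCircle.coe_add] using fourier_add_half_inv_index hn hT (x : AddCircle T)
  rcases abs_choice (n : ℝ) with habs | habs
  · rwa [habs]
  · rw [habs, div_neg]
    exact hshift.neg

end Periodic

section FourierCoeffOn

variable {E : Type*} [NormedAddCommGroup E] [NormedSpace ℂ E] [CompleteSpace E]
  {f f' f'' : ℝ → E} {a b : ℝ} {S : Set ℝ}

lemma norm_fourierCoeffOn_le_of_boundedVariationOn (hab : a < b)
    (hf : BoundedVariationOn f (Icc a b)) {n : ℤ} (hn : n ≠ 0) :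
    ‖fourierCoeffOn hab f n‖ ≤ (eVariationOn f (Icc a b)).toReal / |(n : ℝ)| := by
  have hT : 0 < b - a := sub_pos.2 hab
  have hanti := antiperiodic_fourier hT (neg_ne_zero.2 hn)
  rw [Int.cast_neg, abs_neg] at hanti
  have hmean := integral_eq_zero_of_antiperiodic hanti 0
  rw [zero_add] at hmean
  have hb : a + n.natAbs * (2 * ((b - a) / 2 / |(n : ℝ)|)) = b := by
    rw [Nat.cast_natAbs, Int.cast_abs]
    field_simp
    ring
  have hle := norm_integral_smul_le_of_periodic_of_integral_eq_zero (a := a)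
    (e := fun x : ℝ ↦ fourier (-n) (x : AddCircle (b - a))) (h := f) (n := n.natAbs) (C := 1)
    (by positivity) (by fun_prop) (fun x ↦ (Circle.norm_coe _).le)
    hanti.periodic_two_mul hmean (by rwa [hb])
  rw [hb] at hle
  rw [fourierCoeffOn_eq_integral, norm_smul, Real.norm_of_nonneg (by positivity)]
  calc 1 / (b - a) * ‖∫ x in a..b, fourier (-n) (x : AddCircle (b - a)) • f x‖
      ≤ 1 / (b - a) *
          (2 * ((b - a) / 2 / |(n : ℝ)|) * 1 * (eVariationOn f (Icc a b)).toReal) := by gcongr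
    _ = (eVariationOn f (Icc a b)).toReal / |(n : ℝ)| := by field_simp

lemma fourierCoeffOn_deriv_of_hasDerivAt_off_countable (hab : a < b) (hS : S.Countable)
    (hf : ContinuousOn f (Icc a b)) (hff' : ∀ x ∈ Ioo a b \ S, HasDerivAt f (f' x) x)
    (hf' : IntervalIntegrable f' volume a b) (n : ℤ) :
    fourierCoeffOn hab f' n =
      (1 / (b - a)) • fourier (-n) (a : AddCircle (b - a)) • (f b - f a) +
        (2 * π * Complex.I * n / (b - a)) • fourierCoeffOn hab f n := by
  set e : ℝ → ℂ := fun x ↦ fourier (-n) (x : AddCircle (b - a)) with he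
  set ω : ℂ := 2 * π * Complex.I * n / (b - a)
  have he_cont : Continuous e := by fun_prop
  have he_deriv (x : ℝ) : HasDerivAt e (-ω * e x) x := by
    convert! hasDerivAt_fourier_neg (b - a) n x using 1
    simp only [he, ω]
    push_cast
    ring
  have he_end : e b = e a := by
    simpa [he] using congrArg (fourier (-n)) (AddCircle.coe_add_period (b - a) a)
  have hef : IntervalIntegrable (fun x ↦ e x • f x) volume a b :=
    ((uIcc_of_le hab.le ▸ hf).intervalIntegrable).continuousOn_smul he_cont.continuousOn
  have hef' : IntervalIntegrable (fun x ↦ e x • f' x) volume a b :=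
    hf'.continuousOn_smul he_cont.continuousOn
  have hef_smul : IntervalIntegrable (fun x ↦ ω • e x • f x) volume a b := hef.smul ω
  have hparts : (∫ x in a..b, e x • f' x) - ω • ∫ x in a..b, e x • f x = e a • (f b - f a) := by
    rw [← intervalIntegral.integral_smul, ← intervalIntegral.integral_sub hef' hef_smul,
      integral_eq_of_hasDerivAt_off_countable_of_le (fun x ↦ e x • f x) _ hab.le hS
        (he_cont.continuousOn.smul hf) (fun x hx ↦ ?_) (hef'.sub hef_smul), he_end, smul_sub]
    refine ((he_deriv x).smul (hff' x hx)).congr_deriv ?_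
    simp only [neg_mul, neg_smul, mul_smul, sub_eq_add_neg]
  rw [fourierCoeffOn_eq_integral, fourierCoeffOn_eq_integral, smul_comm ω, ← smul_add, ← hparts,
    sub_add_cancel]

lemma norm_fourierCoeffOn_deriv_of_hasDerivAt_off_countable (hab : a < b) (hS : S.Countable)
    (hf : ContinuousOn f (Icc a b)) (hff' : ∀ x ∈ Ioo a b \ S, HasDerivAt f (f' x) x)
    (hf' : IntervalIntegrable f' volume a b) (hends : f a = f b) (n : ℤ) :
    ‖fourierCoeffOn hab f' n‖ = 2 * π * |(n : ℝ)| / (b - a) * ‖fourierCoeffOn hab f n‖ := by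
  rw [fourierCoeffOn_deriv_of_hasDerivAt_off_countable hab hS hf hff' hf', hends, sub_self,
    smul_zero, smul_zero, zero_add, norm_smul, norm_div, ← Complex.ofReal_sub,
    Complex.norm_of_nonneg (sub_pos.2 hab).le]
  simp [abs_of_pos Real.pi_pos]

lemma norm_fourierCoeffOn_le_div_abs_pow_three (hab : a < b) (hS : S.Countable)
    (hf : ContinuousOn f (Icc a b)) (hff' : ∀ x ∈ Ioo a b \ S, HasDerivAt f (f' x) x)
    (hends : f a = f b) (hf' : ContinuousOn f' (Icc a b))
    (hf'f'' : ∀ x ∈ Ioo a b \ S, HasDerivAt f' (f'' x) x) (hends' : f' a = f' b)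
    (hf'' : BoundedVariationOn f'' (Icc a b)) {n : ℤ} (hn : n ≠ 0) :
    ‖fourierCoeffOn hab f n‖ ≤
      ((b - a) / (2 * π)) ^ 2 * (eVariationOn f'' (Icc a b)).toReal / |(n : ℝ)| ^ 3 := by
  have hT : 0 < b - a := sub_pos.2 hab
  have hdecay := norm_fourierCoeffOn_le_of_boundedVariationOn hab hf'' hn
  rw [norm_fourierCoeffOn_deriv_of_hasDerivAt_off_countable hab hS hf' hf'f''
      (intervalIntegrable_of_boundedVariationOn hab.le hf'') hends',
    norm_fourierCoeffOn_deriv_of_hasDerivAt_off_countable hab hS hf hff'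
      (uIcc_of_le hab.le ▸ hf').intervalIntegrable hends] at hdecay
  calc ‖fourierCoeffOn hab f n‖
      = ((b - a) / (2 * π * |(n : ℝ)|)) ^ 2 * (2 * π * |(n : ℝ)| / (b - a) *
          (2 * π * |(n : ℝ)| / (b - a) * ‖fourierCoeffOn hab f n‖)) := by field_simp
    _ ≤ ((b - a) / (2 * π * |(n : ℝ)|)) ^ 2 *
          ((eVariationOn f'' (Icc a b)).toReal / |(n : ℝ)|) := by gcongr
    _ = ((b - a) / (2 * π)) ^ 2 * (eVariationOn f'' (Icc a b)).toReal / |(n : ℝ)| ^ 3 := by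
        field_simp

lemma fourierCoeffOn_two_pi_eq_integral_exp (f : ℝ → ℂ) (n : ℤ) :
    fourierCoeffOn Real.two_pi_pos f n = (1 / (2 * π) : ℝ) *
      ∫ θ in (0 : ℝ)..(2 * π), Complex.exp (-Complex.I * n * θ) * f θ := by
  have hchar (θ : ℝ) : fourier (-n) (θ : AddCircle (2 * π - 0)) =
      Complex.exp (-Complex.I * n * θ) := by
    rw [fourier_coe_apply]
    congr 1
    push_cast
    field_simp
    ring
  simp only [fourierCoeffOn_eq_integral, hchar, smul_eq_mul, sub_zero, Complex.real_smul]

end FourierCoeffOn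

section Sobolev

lemma isTheta_one_add_sq_rpow (s : ℝ) :
    (fun k : ℤ ↦ (1 + (k : ℝ) ^ 2) ^ s) =Θ[cofinite] fun k ↦ |(k : ℝ)| ^ (2 * s) := by
  have hone_le : ∀ᶠ k : ℤ in cofinite, 1 ≤ (k : ℝ) ^ 2 := by
    filter_upwards [(finite_singleton (0 : ℤ)).compl_mem_cofinite] with k hk
    exact (one_le_sq_iff_one_le_abs _).2 (mod_cast Int.one_le_abs hk)
  have hbase : (fun k : ℤ ↦ 1 + (k : ℝ) ^ 2) =Θ[cofinite] fun k ↦ (k : ℝ) ^ 2 := by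
    refine ⟨.of_bound 2 ?_, .of_bound 1 ?_⟩ <;> filter_upwards [hone_le] with k hk <;>
      rw [Real.norm_of_nonneg (by positivity), Real.norm_of_nonneg (by positivity)] <;> linarith
  convert! hbase.rpow (r := s) (.of_forall fun k ↦ by positivity)
    (.of_forall fun k ↦ by positivity) using 2 with k
  rw [← sq_abs, Real.rpow_mul (abs_nonneg _), Real.rpow_two]

lemma summable_one_add_sq_rpow_mul_norm_sq {E : Type*} [SeminormedAddCommGroup E] {c : ℤ → E}
    {p s : ℝ} (hs : s < p - 1 / 2) (hc : c =O[cofinite] fun k ↦ |(k : ℝ)| ^ (-p)) :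
    Summable fun k : ℤ ↦ (1 + (k : ℝ) ^ 2) ^ s * ‖c k‖ ^ 2 := by
  have hexp : 1 < 2 * p - 2 * s := by linarith
  refine summable_of_isBigO (Real.summable_abs_int_rpow hexp)
    (((isTheta_one_add_sq_rpow s).isBigO.mul (hc.norm_left.pow 2)).trans_eventuallyEq ?_)
  filter_upwards [(finite_singleton (0 : ℤ)).compl_mem_cofinite] with k hk
  have hk : 0 < |(k : ℝ)| := abs_pos.2 (Int.cast_ne_zero.2 hk)
  rw [← Real.rpow_mul_natCast hk.le, ← Real.rpow_add hk]
  congr 1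
  push_cast
  ring

end Sobolev

theorem stmt_1_general {E : Type*} [NormedAddCommGroup E] [NormedSpace ℂ E] [CompleteSpace E]
    {f h : ℝ → E} {a b : ℝ} (hab : a < b) (hper : Periodic f (b - a)) (hC1 : ContDiff ℝ 1 f)
    {S : Set ℝ} (hS : S.Countable) (hbv : BoundedVariationOn h (Icc a b))
    (hf'' : ∀ θ ∈ Ioo a b \ S, HasDerivAt (deriv f) (h θ) θ) {s : ℝ} (hs : s < 5 / 2) :
    Summable fun k : ℤ ↦ (1 + (k : ℝ) ^ 2) ^ s * ‖fourierCoeffOn hab f k‖ ^ 2 := by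
  have hends : f a = f b := by simpa using (hper a).symm
  have hends' : deriv f a = deriv f b := by simpa using (periodic_deriv hper a).symm
  refine summable_one_add_sq_rpow_mul_norm_sq (p := 3) (by linarith) (.of_bound
    (((b - a) / (2 * π)) ^ 2 * (eVariationOn h (Icc a b)).toReal) ?_)
  filter_upwards [(finite_singleton (0 : ℤ)).compl_mem_cofinite] with k hk
  have hdecay := norm_fourierCoeffOn_le_div_abs_pow_three hab hS hC1.continuous.continuousOn
    (fun θ _ ↦ (hC1.differentiable one_ne_zero θ).hasDerivAt) hends
    (hC1.continuous_deriv le_rfl).continuousOn hf'' hends' hbv hk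
  rwa [Real.norm_of_nonneg (by positivity), Real.rpow_neg (abs_nonneg _), ← div_eq_mul_inv,
    Real.rpow_ofNat]

/-- A `2π`-periodic `C¹` function `f : ℝ → ℂ`, twice differentiable off a `2π`-periodized
finite set `F + 2πℤ` with second derivative agreeing off that set with a `2π`-periodic
function `h` of bounded variation on `[0,2π]`, belongs to `H^s` for every `s < 5/2`:
`∑_{k∈ℤ} (1+k²)^s |f̂_k|² < ∞`. -/
theorem stmt_1 (f : ℝ → ℂ)
    (hper : ∀ θ : ℝ, f (θ + 2 * π) = f θ)
    (hC1 : ContDiff ℝ 1 f)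
    (F : Finset ℝ) (hF : (F : Set ℝ) ⊆ Set.Icc 0 (2 * π))
    (h : ℝ → ℂ)
    (hhper : ∀ θ : ℝ, h (θ + 2 * π) = h θ)
    (hhbv : BoundedVariationOn h (Set.Icc 0 (2 * π)))
    (hf'' : ∀ θ : ℝ, (∀ x ∈ F, ∀ n : ℤ, θ ≠ x + 2 * π * n) →
      HasDerivAt (deriv f) (h θ) θ) :
    ∀ s : ℝ, s < 5 / 2 →
      (∑' k : ℤ, ENNReal.ofReal ((1 + (k : ℝ) ^ 2) ^ s *
        ‖((1 / (2 * π) : ℝ) *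
          ∫ θ in (0 : ℝ)..(2 * π), Complex.exp (-Complex.I * k * θ) * f θ : ℂ)‖ ^ 2)) < ⊤ := by
  intro s hs
  have hS : (⋃ x ∈ F, range fun n : ℤ ↦ x + 2 * π * n).Countable :=
    F.countable_toSet.biUnion fun x _ ↦ countable_range _
  simp only [← fourierCoeffOn_two_pi_eq_integral_exp]
  exact (stmt_1_general Real.two_pi_pos (by simpa using hper) hC1 hS hhbv
    (fun θ hθ ↦ hf'' θ fun x hx n hn ↦ hθ.2 (mem_biUnion hx ⟨n, hn.symm⟩)) hs).tsum_ofReal_lt_top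
end

section
/- Let s > 3/2 be real and let γ̃ : ℝ → ℝ be continuously differentiable with γ̃'(θ) > 0 and γ̃(θ+2π) = γ̃(θ) + 2π for all θ. For t ∈ [0,1] set γ̃_t = t·γ̃ + (1−t)·id, and let η_t denote the inverse function of γ̃_t. Suppose C ≥ 0 is such that for every t ∈ [0,1] the Fourier coefficients of η_t' satisfy ∑_{k∈ℤ} (1+k²)^{s−1} |(η_t')^̂_k|² ≤ C². Then for all integers m, n with m < 0 < n or n < 0 < m, the number λ_{m,n} := (1/2π)∫₀^{2π} e^{−imθ} e^{inγ̃(θ)} dθ satisfies |λ_{m,n}| ≤ C/(|m|+|n|)^{s−1}. -/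
open scoped ENNReal Real

/-!
With `t = n / (n - m)` one has `n γ(θ) - m θ = -(m - n) γ_t(θ)`, so the substitution `φ = γ_t(θ)`
turns `λ_{m,n}` into the Fourier coefficient of `η_t'` at `m - n`, and a single term of the Sobolev
sum bounds it. Opposite signs of `m` and `n` give both `0 < t < 1` and `|m - n| = |m| + |n|`.
Since `t < 1`, the map `γ_t` expands distances by at least the factor `1 - t`, so `η_t` is Lipschitz
and the substitution is legitimate for every monotone `γ`.
-/

open Set MeasureTheory Function
open scoped NNReal

section ChangeOfVariables

variable {E : Type*} [NormedAddCommGroup E] [NormedSpace ℝ E] {f g : ℝ → ℝ} {K : ℝ≥0}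

theorem volume_image_eq_zero_of_lipschitzOnWith {s : Set ℝ} (hg : LipschitzOnWith K g s)
    (hs : volume s = 0) : volume (g '' s) = 0 := by
  have hle := hg.hausdorffMeasure_image_le zero_le_one
  rw [hausdorffMeasure_real, hs, mul_zero] at hle
  exact nonpos_iff_eq_zero.mp hle

theorem volume_Icc_sdiff_differentiableAt_of_lipschitzOnWith {a b : ℝ}
    (hg : LipschitzOnWith K g (Icc a b)) :
    volume (Icc a b \ (Ioo a b ∩ {x | DifferentiableAt ℝ g x})) = 0 := by
  rw [← ae_le_set]
  filter_upwards [hg.ae_differentiableWithinAt_of_mem (μ := volume), Ioo_ae_eq_Icc.symm.le]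
    with x hdiff hIoo hx
  exact ⟨hIoo hx, (hdiff hx).differentiableAt (Icc_mem_nhds_iff.mpr (hIoo hx))⟩

theorem integral_deriv_smul_comp_of_monotoneOn_of_lipschitzOnWith {a b : ℝ} (hab : a ≤ b)
    (hmono : MonotoneOn g (Icc a b)) (hg : LipschitzOnWith K g (Icc a b)) (F : ℝ → E) :
    ∫ x in a..b, deriv g x • F (g x) = ∫ y in g a..g b, F y := by
  set s := Ioo a b ∩ {x | DifferentiableAt ℝ g x}
  have hs : MeasurableSet s := measurableSet_Ioo.inter (measurableSet_of_differentiableAt ℝ g)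
  have hsub : s ⊆ Icc a b := inter_subset_left.trans Ioo_subset_Icc_self
  have hnull : volume (Icc a b \ s) = 0 := volume_Icc_sdiff_differentiableAt_of_lipschitzOnWith hg
  have himage : g '' Icc a b = Icc (g a) (g b) :=
    hmono.image_Icc_subset.antisymm (intermediate_value_Icc hab hg.continuousOn)
  have hs_ae : s =ᵐ[volume] Icc a b := hsub.eventuallyLE.antisymm (ae_le_set.mpr hnull)
  have himage_ae : g '' s =ᵐ[volume] Icc (g a) (g b) := by
    rw [← himage]
    have himage_sdiff : g '' Icc a b \ g '' s ⊆ g '' (Icc a b \ s) := by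
      rw [sdiff_subset_iff, ← image_union, union_sdiff_cancel hsub]
    exact (image_mono hsub).eventuallyLE.antisymm <| ae_le_set.mpr <|
      measure_mono_null himage_sdiff <|
        volume_image_eq_zero_of_lipschitzOnWith (hg.mono sdiff_subset) hnull
  have hle : g a ≤ g b := hmono (left_mem_Icc.mpr hab) (right_mem_Icc.mpr hab) hab
  rw [intervalIntegral.integral_of_le hab, intervalIntegral.integral_of_le hle,
    ← integral_Icc_eq_integral_Ioc, ← integral_Icc_eq_integral_Ioc,
    ← setIntegral_congr_set hs_ae, ← setIntegral_congr_set himage_ae]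
  exact (integral_image_eq_integral_deriv_smul_of_monotoneOn hs
    (fun x hx => hx.2.hasDerivAt.hasDerivWithinAt) (hmono.mono hsub) F).symm

theorem integral_deriv_smul_of_rightInverse_of_periodic {T : ℝ} (hT : 0 ≤ T) (hf : StrictMono f)
    (hper : ∀ x, f (x + T) = f x + T) (hr : RightInverse g f) (hg : LipschitzWith K g)
    {G : ℝ → E} (hG : Periodic G T) :
    ∫ y in (0 : ℝ)..T, deriv g y • G y = ∫ x in (0 : ℝ)..T, G (f x) := by
  have hgmono : Monotone g := fun x y hxy => hf.le_iff_le.mp (by rwa [hr x, hr y])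
  have hgT : g T = g 0 + T := hf.injective (by rw [hr, hper, hr, zero_add])
  have hGf : Periodic (G ∘ f) T := fun x => by simp only [comp_apply, hper, hG (f x)]
  calc ∫ y in (0 : ℝ)..T, deriv g y • G y
      = ∫ y in (0 : ℝ)..T, deriv g y • (G ∘ f) (g y) := by simp only [comp_apply, hr _]
    _ = ∫ x in g 0..g T, (G ∘ f) x :=
        integral_deriv_smul_comp_of_monotoneOn_of_lipschitzOnWith hT (hgmono.monotoneOn _)
          hg.lipschitzOnWith _
    _ = ∫ x in (0 : ℝ)..T, G (f x) := by
        simpa only [hgT, zero_add, comp_apply] using hGf.intervalIntegral_add_eq (g 0) 0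

end ChangeOfVariables

/-- The straight-line homotopy `γ_t = t γ + (1 - t) id` from the identity to a
self-map `γ` of `ℝ`. -/
def homotopyFromId (γ : ℝ → ℝ) (t : ℝ) : ℝ → ℝ := fun θ => t * γ θ + (1 - t) * θ

namespace homotopyFromId

variable {γ : ℝ → ℝ} {t : ℝ}

theorem apply_add_period {T : ℝ} (hγ : ∀ θ, γ (θ + T) = γ θ + T) (θ : ℝ) :
    homotopyFromId γ t (θ + T) = homotopyFromId γ t θ + T := by
  simp only [homotopyFromId, hγ]
  ring

theorem mul_sub_le_sub (hγ : Monotone γ) (ht : 0 ≤ t) {x y : ℝ} (hxy : x ≤ y) :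
    (1 - t) * (y - x) ≤ homotopyFromId γ t y - homotopyFromId γ t x := by
  have := mul_le_mul_of_nonneg_left (hγ hxy) ht
  simp only [homotopyFromId]
  linarith

theorem strictMono (hγ : Monotone γ) (ht : t ∈ Ico (0 : ℝ) 1) : StrictMono (homotopyFromId γ t) :=
  fun _ _ hxy => sub_pos.mp <|
    (mul_pos (sub_pos.mpr ht.2) (sub_pos.mpr hxy)).trans_le (mul_sub_le_sub hγ ht.1 hxy.le)

theorem antilipschitzWith (hγ : Monotone γ) (ht : t ∈ Ico (0 : ℝ) 1) :
    AntilipschitzWith (1 - t).toNNReal⁻¹ (homotopyFromId γ t) := by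
  have hpos : 0 < 1 - t := sub_pos.mpr ht.2
  refine AntilipschitzWith.of_le_mul_dist fun x y => ?_
  rw [NNReal.coe_inv, Real.coe_toNNReal _ hpos.le, ← div_eq_inv_mul, le_div_iff₀' hpos]
  wlog hxy : y ≤ x generalizing x y
  · simpa only [dist_comm] using this y x (le_of_not_ge hxy)
  rw [Real.dist_eq, abs_of_nonneg (sub_nonneg.mpr hxy)]
  exact (mul_sub_le_sub hγ ht.1 hxy).trans (le_abs_self _)

end homotopyFromId

section FourierCoefficients

theorem fourierCoeffOn_two_pi_eq_integral (h : ℝ → ℂ) (k : ℤ) :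
    fourierCoeffOn Real.two_pi_pos h k =
      (1 / (2 * π) : ℝ) * ∫ φ in (0 : ℝ)..(2 * π), Complex.exp (-Complex.I * k * φ) * h φ := by
  rw [fourierCoeffOn_eq_integral, sub_zero, Complex.real_smul]
  congr! 4 with φ
  rw [fourier_coe_apply]
  congr 2
  push_cast
  field_simp

theorem periodic_exp_neg_I_mul_int_mul (k : ℤ) :
    Periodic (fun φ : ℝ => Complex.exp (-Complex.I * k * φ)) (2 * π) := fun φ => by
  rw [Complex.exp_eq_exp_iff_exists_int]
  exact ⟨-k, by push_cast; ring⟩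

theorem fourierCoeffOn_exp_eq_fourierCoeffOn_deriv {γ g : ℝ → ℝ} (hγ : Monotone γ)
    (hper : ∀ θ, γ (θ + 2 * π) = γ θ + 2 * π) {t : ℝ} (ht : t ∈ Ico (0 : ℝ) 1)
    (hg : RightInverse g (homotopyFromId γ t)) {m n : ℤ} (hmn : t * (n - m) = n) :
    fourierCoeffOn Real.two_pi_pos (fun θ => Complex.exp (Complex.I * n * γ θ)) m =
      fourierCoeffOn Real.two_pi_pos (fun φ => ((deriv g φ : ℝ) : ℂ)) (m - n) := by
  have hphase (θ : ℝ) : Complex.exp (-Complex.I * m * θ) * Complex.exp (Complex.I * n * γ θ) =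
      Complex.exp (-Complex.I * (m - n : ℤ) * homotopyFromId γ t θ) := by
    have hmn' : (t : ℂ) * (n - m) = n := by exact_mod_cast hmn
    rw [← Complex.exp_add]
    congr 1
    simp only [homotopyFromId]
    push_cast
    linear_combination (Complex.I * θ - Complex.I * γ θ) * hmn'
  have hsubst := integral_deriv_smul_of_rightInverse_of_periodic Real.two_pi_pos.le
    (homotopyFromId.strictMono hγ ht) (homotopyFromId.apply_add_period hper) hg
    ((homotopyFromId.antilipschitzWith hγ ht).to_rightInverse hg)
    (periodic_exp_neg_I_mul_int_mul (m - n))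
  simp only [fourierCoeffOn_two_pi_eq_integral, hphase, ← hsubst, Complex.real_smul,
    mul_comm (Complex.ofReal _) (Complex.exp _)]

variable {E : Type*} [Norm E]

/-- The squared Sobolev norm `∑ (1 + k²)^r ‖c_k‖²` of order `r` of a function with Fourier
coefficients `c`, with value `∞` when the series diverges. -/
noncomputable def sobolevNormSq (r : ℝ) (c : ℤ → E) : ℝ≥0∞ :=
  ∑' k : ℤ, ENNReal.ofReal ((1 + (k : ℝ) ^ 2) ^ r * ‖c k‖ ^ 2)

theorem norm_le_div_rpow_of_sobolevNormSq_le {c : ℤ → E} {r C : ℝ} (hr : 0 ≤ r) (hC : 0 ≤ C)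
    (h : sobolevNormSq r c ≤ ENNReal.ofReal (C ^ 2)) {k : ℤ} (hk : k ≠ 0) :
    ‖c k‖ ≤ C / |(k : ℝ)| ^ r := by
  have hk' : 0 < |(k : ℝ)| := abs_pos.mpr (Int.cast_ne_zero.mpr hk)
  have hterm : (1 + (k : ℝ) ^ 2) ^ r * ‖c k‖ ^ 2 ≤ C ^ 2 :=
    (ENNReal.ofReal_le_ofReal_iff (sq_nonneg C)).mp ((ENNReal.le_tsum k).trans h)
  rw [le_div_iff₀ (Real.rpow_pos_of_pos hk' r)]
  refine le_of_sq_le_sq ?_ hC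
  calc (‖c k‖ * |(k : ℝ)| ^ r) ^ 2 = ((k : ℝ) ^ 2) ^ r * ‖c k‖ ^ 2 := by
        rw [mul_pow, Real.rpow_pow_comm hk'.le, sq_abs, mul_comm]
    _ ≤ (1 + (k : ℝ) ^ 2) ^ r * ‖c k‖ ^ 2 := by gcongr; linarith
    _ ≤ C ^ 2 := hterm

end FourierCoefficients

theorem div_sub_mem_Ioo_of_opposite_signs {𝕜 : Type*} [Field 𝕜] [LinearOrder 𝕜]
    [IsStrictOrderedRing 𝕜] {x y : 𝕜} (h : (x < 0 ∧ 0 < y) ∨ (y < 0 ∧ 0 < x)) :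
    y / (y - x) ∈ Ioo (0 : 𝕜) 1 := by
  rcases h with ⟨hx, hy⟩ | ⟨hy, hx⟩
  · have hyx : 0 < y - x := by linarith
    exact ⟨div_pos hy hyx, (div_lt_one hyx).mpr (by linarith)⟩
  · have hyx : y - x < 0 := by linarith
    exact ⟨div_pos_of_neg_of_neg hy hyx, (div_lt_one_of_neg hyx).mpr (by linarith)⟩

theorem abs_sub_eq_abs_add_abs_of_opposite_signs {R : Type*} [AddCommGroup R] [LinearOrder R]
    [IsOrderedAddMonoid R] {x y : R} (h : (x < 0 ∧ 0 < y) ∨ (y < 0 ∧ 0 < x)) :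
    |x - y| = |x| + |y| := by
  rw [sub_eq_add_neg, ← abs_neg y, abs_add_eq_add_abs_iff, neg_nonneg, neg_nonpos]
  exact h.symm.imp (fun h => ⟨h.2.le, h.1.le⟩) fun h => ⟨h.1.le, h.2.le⟩

theorem stmt_5_general {s : ℝ} (hs : 1 ≤ s) {γ : ℝ → ℝ} (hγ : Monotone γ)
    (hper : ∀ θ, γ (θ + 2 * π) = γ θ + 2 * π) {η : ℝ → ℝ → ℝ}
    (hη : ∀ t ∈ Ioo (0 : ℝ) 1, RightInverse (η t) (homotopyFromId γ t)) {C : ℝ} (hC : 0 ≤ C)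
    (hbound : ∀ t ∈ Ioo (0 : ℝ) 1,
      sobolevNormSq (s - 1) (fourierCoeffOn Real.two_pi_pos fun φ => ((deriv (η t) φ : ℝ) : ℂ)) ≤
        ENNReal.ofReal (C ^ 2))
    {m n : ℤ} (hmn : (m < 0 ∧ 0 < n) ∨ (n < 0 ∧ 0 < m)) :
    ‖fourierCoeffOn Real.two_pi_pos (fun θ => Complex.exp (Complex.I * n * γ θ)) m‖ ≤
      C / (|(m : ℝ)| + |(n : ℝ)|) ^ (s - 1) := by
  have hmn_real : ((m : ℝ) < 0 ∧ 0 < (n : ℝ)) ∨ ((n : ℝ) < 0 ∧ 0 < (m : ℝ)) := by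
    exact_mod_cast hmn
  have ht := div_sub_mem_Ioo_of_opposite_signs hmn_real
  have hne : m ≠ n := by omega
  have hsub : (n : ℝ) - m ≠ 0 := sub_ne_zero.mpr (by exact_mod_cast hne.symm)
  rw [← abs_sub_eq_abs_add_abs_of_opposite_signs hmn_real, ← Int.cast_sub m n,
    fourierCoeffOn_exp_eq_fourierCoeffOn_deriv hγ hper (Ioo_subset_Ico_self ht) (hη _ ht)
      (div_mul_cancel₀ _ hsub)]
  exact norm_le_div_rpow_of_sobolevNormSq_le (sub_nonneg.mpr hs) hC (hbound _ ht)
    (sub_ne_zero.mpr hne)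

/-- Lemma 5.1: for a lift `γ` of a circle diffeomorphism, with interpolations
`γ_t = t γ + (1-t) id` having inverses `η t` whose derivatives have uniformly bounded
`H^{s-1}` norm `≤ C²`, the coefficients `λ_{m,n} = (1/2π)∫₀^{2π} e^{-imθ} e^{inγ(θ)} dθ`
satisfy `|λ_{m,n}| ≤ C/(|m|+|n|)^{s-1}` whenever `m,n` have opposite signs. -/
theorem stmt_5 (s : ℝ) (hs : 3 / 2 < s) (γ : ℝ → ℝ)
    (hC1 : ContDiff ℝ 1 γ) (hpos : ∀ θ : ℝ, 0 < deriv γ θ)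
    (hper : ∀ θ : ℝ, γ (θ + 2 * π) = γ θ + 2 * π)
    (η : ℝ → ℝ → ℝ)
    (hη : ∀ t ∈ Set.Icc (0 : ℝ) 1,
      Function.LeftInverse (η t) (fun θ => t * γ θ + (1 - t) * θ) ∧
      Function.RightInverse (η t) (fun θ => t * γ θ + (1 - t) * θ))
    (C : ℝ) (hC : 0 ≤ C)
    (hbound : ∀ t ∈ Set.Icc (0 : ℝ) 1,
      (∑' k : ℤ, ENNReal.ofReal ((1 + (k : ℝ) ^ 2) ^ (s - 1) *
        ‖((1 / (2 * π) : ℝ) *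
          ∫ φ in (0 : ℝ)..(2 * π), Complex.exp (-Complex.I * k * φ) * (Complex.ofReal (deriv (η t) φ)) : ℂ)‖ ^ 2))
        ≤ ENNReal.ofReal (C ^ 2))
    (m n : ℤ) (hmn : (m < 0 ∧ 0 < n) ∨ (n < 0 ∧ 0 < m)) :
    ‖((1 / (2 * π) : ℝ) *
        ∫ θ in (0 : ℝ)..(2 * π), Complex.exp (-Complex.I * m * θ) * Complex.exp (Complex.I * n * γ θ) : ℂ)‖
      ≤ C / (|(m : ℝ)| + |(n : ℝ)|) ^ (s - 1) := by
  have hcoeff := fourierCoeffOn_two_pi_eq_integral fun θ => Complex.exp (Complex.I * n * γ θ)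
  rw [← hcoeff]
  refine stmt_5_general (by linarith) (strictMono_of_deriv_pos hpos).monotone hper
    (fun t ht => (hη t (Ioo_subset_Icc_self ht)).2) hC (fun t ht => ?_) hmn
  simpa only [sobolevNormSq, fourierCoeffOn_two_pi_eq_integral] using
    hbound t (Ioo_subset_Icc_self ht)
end

section
/- Let s > 2 be real and let γ̃ : ℝ → ℝ be continuously differentiable with γ̃'(θ) > 0 and γ̃(θ+2π) = γ̃(θ) + 2π for all θ. For t ∈ [0,1] set γ̃_t = t·γ̃ + (1−t)·id, let η_t be the inverse function of γ̃_t, and suppose C ≥ 0 is such that ∑_{k∈ℤ} (1+k²)^{s−1} |(η_t')^̂_k|² ≤ C² for every t ∈ [0,1]. Define λ_{m,n} := (1/2π)∫₀^{2π} e^{−imθ} e^{inγ̃(θ)} dθ. Then the family ( (m/n) · |λ_{−m,n}|² )_{(m,n), m≥1, n≥1} is summable. -/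
open scoped ENNReal Real

/-! Multiplying and dividing by `m + n` turns the phase of `λ_{-m,n}` into
`m θ + n γ θ = (m + n) γ_t θ` with `t = n / (m + n)`. Substituting `φ = γ_t θ` identifies
`λ_{-m,n}` with the Fourier coefficient of `η_t'` of index `-(m + n)`, which is
`O((m + n) ^ (-(s - 1)))` uniformly in `t`. Since `m ^ s * n ^ (s - 2) ≤ (m + n) ^ (2 * (s - 1))`,
the family is dominated by a multiple of `m ^ (-(s - 1)) * n ^ (-(s - 1))`. -/

open Complex (I)
open Function (Periodic RightInverse)
open Set (Ioo)

/-- The `k`-th Fourier coefficient over the period `[0, 2π]` of a function on the line. It is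
written with an explicit exponential, unlike `fourierCoeffOn`, to match the integrals defining
`λ_{m,n}`. -/
noncomputable def fourierMode (h : ℝ → ℂ) (k : ℤ) : ℂ :=
  (1 / (2 * π) : ℝ) * ∫ φ in (0 : ℝ)..(2 * π), Complex.exp (-I * k * φ) * h φ

/-- The linear interpolation `γ_t` from the identity (at `t = 0`) to `γ` (at `t = 1`). -/
def idInterp (γ : ℝ → ℝ) (t θ : ℝ) : ℝ := t * γ θ + (1 - t) * θ

theorem intervalIntegral_comp_orderIso_eq_deriv_symm_smul {E : Type*} [NormedAddCommGroup E]
    [NormedSpace ℝ E] (e : ℝ ≃o ℝ) (hderiv : ∀ θ, deriv e θ ≠ 0) {T : ℝ}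
    (hequiv : ∀ θ, e (θ + T) = e θ + T) {h : ℝ → E} (hh : Periodic h T) :
    ∫ θ in (0 : ℝ)..T, h (e θ) = ∫ φ in (0 : ℝ)..T, deriv e.symm φ • h φ := by
  have hasDeriv (θ : ℝ) : HasDerivAt e (deriv e θ) θ :=
    (differentiableAt_of_deriv_ne_zero (hderiv θ)).hasDerivAt
  have deriv_symm (φ : ℝ) : deriv e.symm φ = (deriv e (e.symm φ))⁻¹ :=
    ((hasDeriv _).of_local_left_inverse e.symm.continuous.continuousAt (hderiv _)
      (.of_forall e.apply_symm_apply)).deriv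
  have symm_equiv (φ : ℝ) : e.symm (φ + T) = e.symm φ + T := by
    rw [e.symm_apply_eq, hequiv, e.apply_symm_apply]
  have periodic : Periodic (fun φ => deriv e.symm φ • h φ) T := fun φ => by
    simp only [← deriv_comp_add_const e.symm, symm_equiv, deriv_add_const, hh φ]
  calc ∫ θ in (0 : ℝ)..T, h (e θ)
      = ∫ θ in (0 : ℝ)..T, deriv e θ • (deriv e.symm (e θ) • h (e θ)) := by
        simp only [deriv_symm, e.symm_apply_apply, smul_inv_smul₀ (hderiv _)]
    _ = ∫ φ in e 0..e T, deriv e.symm φ • h φ :=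
        intervalIntegral.integral_deriv_smul_comp_of_deriv_nonneg
          (g := fun φ => deriv e.symm φ • h φ) e.continuous.continuousOn
          (fun θ _ => hasDeriv θ) fun _ _ => e.monotone.deriv_nonneg
    _ = ∫ φ in (0 : ℝ)..T, deriv e.symm φ • h φ := by
        rw [← zero_add T, hequiv, periodic.intervalIntegral_add_eq (e 0) 0]

theorem periodic_exp_neg_I_mul_int (k : ℤ) :
    Periodic (fun φ : ℝ => Complex.exp (-I * k * φ)) (2 * π) := fun φ => by
  refine Complex.exp_eq_exp_iff_exists_int.2 ⟨-k, ?_⟩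
  push_cast
  ring

theorem fourierMode_deriv_symm (e : ℝ ≃o ℝ) (hderiv : ∀ θ, deriv e θ ≠ 0)
    (hequiv : ∀ θ, e (θ + 2 * π) = e θ + 2 * π) (k : ℤ) :
    fourierMode (fun φ => ((deriv e.symm φ : ℝ) : ℂ)) k =
      (1 / (2 * π) : ℝ) * ∫ θ in (0 : ℝ)..(2 * π), Complex.exp (-I * k * e θ) := by
  rw [fourierMode, intervalIntegral_comp_orderIso_eq_deriv_symm_smul e hderiv hequiv
    (periodic_exp_neg_I_mul_int k)]
  simp only [Complex.real_smul, mul_comm]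

section Interpolation

variable {γ : ℝ → ℝ} {t : ℝ}

theorem strictMono_idInterp (hmono : Monotone γ) (ht₀ : 0 ≤ t) (ht₁ : t < 1) :
    StrictMono (idInterp γ t) :=
  (hmono.const_mul ht₀).add_strictMono (strictMono_mul_left_of_pos (sub_pos.2 ht₁))

theorem deriv_idInterp_pos (hγ : Differentiable ℝ γ) (hmono : Monotone γ) (ht₀ : 0 ≤ t)
    (ht₁ : t < 1) (θ : ℝ) : 0 < deriv (idInterp γ t) θ := by
  have hasDeriv : HasDerivAt (idInterp γ t) (t * deriv γ θ + (1 - t) * 1) θ :=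
    ((hγ θ).hasDerivAt.const_mul t).fun_add ((hasDerivAt_id' θ).const_mul (1 - t))
  rw [hasDeriv.deriv]
  have := mul_nonneg ht₀ (hmono.deriv_nonneg (x := θ))
  linarith

theorem idInterp_add_of_equivariant {T : ℝ} (hequiv : ∀ θ, γ (θ + T) = γ θ + T) (θ : ℝ) :
    idInterp γ t (θ + T) = idInterp γ t θ + T := by
  rw [idInterp, idInterp, hequiv]
  ring

theorem exp_mul_exp_eq_exp_idInterp {m n : ℤ} (hmn : m + n ≠ 0) (θ : ℝ) :
    Complex.exp (-I * (-m : ℤ) * θ) * Complex.exp (I * n * γ θ) =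
      Complex.exp (-I * (-(m + n) : ℤ) * idInterp γ (n / (m + n)) θ) := by
  have hmn' : (m : ℂ) + n ≠ 0 := by exact_mod_cast hmn
  rw [← Complex.exp_add, idInterp]
  congr 1
  push_cast
  field_simp
  ring

theorem fourierMode_exp_eq_fourierMode_deriv_inverse (hγ : Differentiable ℝ γ)
    (hmono : Monotone γ) (hequiv : ∀ θ, γ (θ + 2 * π) = γ θ + 2 * π) {m n : ℤ} (hm : 0 < m)
    (hn : 0 ≤ n) {η : ℝ → ℝ} (hη : RightInverse η (idInterp γ (n / (m + n)))) :
    fourierMode (fun θ => Complex.exp (I * n * γ θ)) (-m) =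
      fourierMode (fun φ => ((deriv η φ : ℝ) : ℂ)) (-(m + n)) := by
  have hmR : (0 : ℝ) < m := by exact_mod_cast hm
  have hnR : (0 : ℝ) ≤ n := by exact_mod_cast hn
  have hsum : (0 : ℝ) < m + n := add_pos_of_pos_of_nonneg hmR hnR
  have ht₀ : (0 : ℝ) ≤ n / (m + n) := div_nonneg hnR hsum.le
  have ht₁ : (n / (m + n) : ℝ) < 1 := (div_lt_one hsum).2 (by linarith)
  have hmn : m + n ≠ 0 := by lia
  simp only [fourierMode, exp_mul_exp_eq_exp_idInterp hmn]
  exact (fourierMode_deriv_symm ((strictMono_idInterp hmono ht₀ ht₁).orderIsoOfRightInverse _ η hη)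
    (fun θ => (deriv_idInterp_pos hγ hmono ht₀ ht₁ θ).ne')
    (idInterp_add_of_equivariant hequiv) (-(m + n))).symm

end Interpolation

theorem rpow_add_one_mul_rpow_sub_one_le {m n σ : ℝ} (hm : 0 < m) (hn : 0 < n) (hσ : 1 ≤ σ) :
    m ^ (σ + 1) * n ^ (σ - 1) ≤ (1 + (m + n) ^ 2) ^ σ :=
  calc m ^ (σ + 1) * n ^ (σ - 1) ≤ (m + n) ^ (σ + 1) * (m + n) ^ (σ - 1) := by
        gcongr <;> linarith
    _ = ((m + n) ^ 2) ^ σ := by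
        rw [← Real.rpow_add (by positivity), ← Real.rpow_natCast_mul (by positivity)]
        congr 1
        push_cast
        ring
    _ ≤ (1 + (m + n) ^ 2) ^ σ := by
        gcongr
        linarith

theorem div_mul_inv_rpow_le {m n σ : ℝ} (hm : 0 < m) (hn : 0 < n) (hσ : 1 ≤ σ) :
    m / n * ((1 + (m + n) ^ 2) ^ σ)⁻¹ ≤ (m ^ σ)⁻¹ * (n ^ σ)⁻¹ :=
  calc m / n * ((1 + (m + n) ^ 2) ^ σ)⁻¹ ≤ m / n * (m ^ (σ + 1) * n ^ (σ - 1))⁻¹ := by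
        gcongr
        exact rpow_add_one_mul_rpow_sub_one_le hm hn hσ
    _ = (m ^ σ)⁻¹ * (n ^ σ)⁻¹ := by
        rw [Real.rpow_add_one hm.ne', Real.rpow_sub_one hn.ne']
        field_simp

theorem summable_div_mul_inv_rpow {σ : ℝ} (hσ : 1 < σ) :
    Summable fun p : ℕ+ × ℕ+ =>
      (p.1 / p.2 : ℝ) * ((1 + ((p.1 : ℝ) + p.2) ^ 2) ^ σ)⁻¹ := by
  have hsum : Summable fun n : ℕ+ => ((n : ℝ) ^ σ)⁻¹ :=
    (Real.summable_nat_rpow_inv.2 hσ).comp_injective PNat.coe_injective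
  refine .of_nonneg_of_le (fun p => by positivity) (fun p => ?_)
    (hsum.mul_of_nonneg hsum (fun n => by positivity) fun n => by positivity)
  exact div_mul_inv_rpow_le (Nat.cast_pos.2 p.1.pos) (Nat.cast_pos.2 p.2.pos) hσ.le

theorem stmt_7_general {s : ℝ} (hs : 2 < s) {γ : ℝ → ℝ} (hγ : Differentiable ℝ γ)
    (hmono : Monotone γ) (hper : ∀ θ, γ (θ + 2 * π) = γ θ + 2 * π) {η : ℝ → ℝ → ℝ}
    (hη : ∀ t ∈ Ioo (0 : ℝ) 1, RightInverse (η t) (idInterp γ t)) {C : ℝ}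
    (hbound : ∀ t ∈ Ioo (0 : ℝ) 1, ∀ k : ℤ,
      (1 + (k : ℝ) ^ 2) ^ (s - 1) * ‖fourierMode (fun φ => ((deriv (η t) φ : ℝ) : ℂ)) k‖ ^ 2 ≤ C) :
    Summable fun p : ℕ+ × ℕ+ => (p.1 / p.2 : ℝ) *
      ‖fourierMode (fun θ => Complex.exp (I * (p.2 : ℤ) * γ θ)) (-(p.1 : ℤ))‖ ^ 2 := by
  refine .of_nonneg_of_le (fun p => by positivity) (fun ⟨m, n⟩ => ?_)
    ((summable_div_mul_inv_rpow (by linarith : 1 < s - 1)).mul_left C)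
  have hm : (0 : ℝ) < (m : ℤ) := by exact_mod_cast m.pos
  have hn : (0 : ℝ) < (n : ℤ) := by exact_mod_cast n.pos
  have ht : ((n : ℤ) / ((m : ℤ) + (n : ℤ)) : ℝ) ∈ Ioo (0 : ℝ) 1 :=
    ⟨div_pos hn (add_pos hm hn), (div_lt_one (add_pos hm hn)).2 (by linarith)⟩
  have hmode := fourierMode_exp_eq_fourierMode_deriv_inverse hγ hmono hper
    (by exact_mod_cast m.pos) (by positivity) (hη _ ht)
  have hdecay := hbound _ ht (-((m : ℤ) + n))
  rw [← hmode, mul_comm, ← le_div_iff₀ (by positivity)] at hdecay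
  calc _ ≤ (m / n : ℝ) * (C / (1 + (((-((m : ℤ) + n) : ℤ)) : ℝ) ^ 2) ^ (s - 1)) := by gcongr
    _ = C * ((m / n : ℝ) * ((1 + ((m : ℝ) + n) ^ 2) ^ (s - 1))⁻¹) := by
        push_cast
        rw [neg_sq]
        ring

/-- Proposition 5.2 (Shale criterion, analytic content): for `s > 2` and a Sobolev-type
lift `γ` whose interpolation inverses `η t` have uniformly `H^{s-1}`-bounded derivatives,
the family `(m/n)|λ_{-m,n}|²` over `m,n ≥ 1` is summable, where
`λ_{m,n} = (1/2π)∫₀^{2π} e^{-imθ} e^{inγ(θ)} dθ`. -/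
theorem stmt_7 (s : ℝ) (hs : 2 < s) (γ : ℝ → ℝ)
    (hC1 : ContDiff ℝ 1 γ) (hpos : ∀ θ : ℝ, 0 < deriv γ θ)
    (hper : ∀ θ : ℝ, γ (θ + 2 * π) = γ θ + 2 * π)
    (η : ℝ → ℝ → ℝ)
    (hη : ∀ t ∈ Set.Icc (0 : ℝ) 1,
      Function.LeftInverse (η t) (fun θ => t * γ θ + (1 - t) * θ) ∧
      Function.RightInverse (η t) (fun θ => t * γ θ + (1 - t) * θ))
    (C : ℝ) (hC : 0 ≤ C)
    (hbound : ∀ t ∈ Set.Icc (0 : ℝ) 1,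
      (∑' k : ℤ, ENNReal.ofReal ((1 + (k : ℝ) ^ 2) ^ (s - 1) *
        ‖((1 / (2 * π) : ℝ) *
          ∫ φ in (0 : ℝ)..(2 * π), Complex.exp (-Complex.I * k * φ) *
            Complex.ofReal (deriv (η t) φ) : ℂ)‖ ^ 2))
        ≤ ENNReal.ofReal (C ^ 2)) :
    Summable (fun p : ℕ+ × ℕ+ =>
      ((p.1 : ℝ) / (p.2 : ℝ)) *
        ‖((1 / (2 * π) : ℝ) *
          ∫ θ in (0 : ℝ)..(2 * π),
            Complex.exp (-Complex.I * ((-(p.1 : ℤ) : ℤ) : ℂ) * θ) *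
              Complex.exp (Complex.I * ((p.2 : ℤ) : ℂ) * γ θ) : ℂ)‖ ^ 2) :=
  stmt_7_general hs (hC1.differentiable one_ne_zero) (strictMono_of_deriv_pos hpos).monotone hper
    (fun t ht => (hη t (Set.Ioo_subset_Icc_self ht)).2) fun t ht k =>
      (ENNReal.ofReal_le_ofReal_iff (sq_nonneg C)).1
        ((ENNReal.le_tsum k).trans (hbound t (Set.Ioo_subset_Icc_self ht)))
end

section
/- Let h : ℝ → ℝ be a smooth function with h(t) = 1 for t ≤ 1 and h(t) = 0 for t ≥ 2. Define 2π-periodic functions g, g_n : ℝ → ℝ (n ≥ 1) by g(θ) = 1 + cos θ, and g_n(θ) = (1+cos θ)·h(tan(θ/2)/n) for θ ∈ (−π, π), g_n(π) = 0, extended 2π-periodically. Then for every real s with 2 < s < 5/2, one has ∑_{k∈ℤ} (1+k²)^s |(g_n − g)^̂_k|² → 0 as n → ∞. -/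
open scoped ENNReal Real

open Filter MeasureTheory Set Topology

/-! The difference `g_n - g` is supported in an arc of length `O(1 / n)` ending at `π`, where its
second derivative has its only jump, of size independent of `n`. Away from `π` its third
derivative is `O(n)`, so three integrations by parts bound the `k`-th Fourier coefficient by
`K / |k|³` uniformly in `n`, while the short support makes every coefficient `O(1 / n)`. Since
`∑ (1 + k²) ^ (s - 3)` converges exactly for `s < 5 / 2`, dominated convergence applies. -/

lemma norm_cexp_mul_ofReal {z : ℂ} (hz : z.re = 0) (x : ℝ) : ‖Complex.exp (z * x)‖ = 1 := by
  simp [Complex.norm_exp, hz]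

lemma intervalIntegrable_of_continuousOn_Ioo_of_tendsto {E : Type*} [NormedAddCommGroup E]
    {f : ℝ → E} {a b : ℝ} {A B : E} (hab : a < b) (hf : ContinuousOn f (Ioo a b))
    (hA : Tendsto f (𝓝[>] a) (𝓝 A)) (hB : Tendsto f (𝓝[<] b) (𝓝 B)) :
    IntervalIntegrable f volume a b := by
  have hcont := continuousOn_Icc_extendFrom_Ioo hf hA hB
  refine (hcont.intervalIntegrable_of_Icc hab.le).congr_uIoo fun x hx => ?_
  rw [uIoo_of_le hab.le] at hx
  exact extendFrom_extends hf x hx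

lemma integral_cexp_mul_add_integral_cexp_mul_deriv {z : ℂ} {a b : ℝ} {A B : ℂ} (hab : a < b)
    {f f' : ℝ → ℂ} (hf : ∀ x ∈ Ioo a b, HasDerivAt f (f' x) x)
    (hf' : IntervalIntegrable f' volume a b)
    (hA : Tendsto f (𝓝[>] a) (𝓝 A)) (hB : Tendsto f (𝓝[<] b) (𝓝 B)) :
    z * (∫ x in a..b, Complex.exp (z * x) * f x) + ∫ x in a..b, Complex.exp (z * x) * f' x =
      Complex.exp (z * b) * B - Complex.exp (z * a) * A := by
  have hexp : Continuous fun x : ℝ => Complex.exp (z * x) := by fun_prop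
  have hexp_deriv (x : ℝ) :
      HasDerivAt (fun x : ℝ => Complex.exp (z * x)) (Complex.exp (z * x) * z) x := by
    simpa using ((Complex.ofRealCLM.hasDerivAt (x := x)).const_mul z).cexp
  have hexp_tendsto {l : Filter ℝ} {x₀ : ℝ} (hl : l ≤ 𝓝 x₀) :
      Tendsto (fun x : ℝ => Complex.exp (z * x)) l (𝓝 (Complex.exp (z * x₀))) :=
    (hexp.tendsto x₀).mono_left hl
  have hint : IntervalIntegrable (fun x => Complex.exp (z * x) * f x) volume a b :=
    (intervalIntegrable_of_continuousOn_Ioo_of_tendsto hab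
      (fun x hx => (hf x hx).continuousAt.continuousWithinAt) hA hB).continuousOn_mul
      hexp.continuousOn
  have hint' : IntervalIntegrable (fun x => Complex.exp (z * x) * f' x) volume a b :=
    hf'.continuousOn_mul hexp.continuousOn
  rw [← intervalIntegral.integral_const_mul,
    ← intervalIntegral.integral_add (hint.const_mul z) hint']
  refine intervalIntegral.integral_eq_sub_of_hasDerivAt_of_tendsto hab
    (f := fun x => Complex.exp (z * x) * f x) (fun x hx => ?_) ((hint.const_mul z).add hint')
    ((hexp_tendsto nhdsWithin_le_nhds).mul hA) ((hexp_tendsto nhdsWithin_le_nhds).mul hB)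
  exact ((hexp_deriv x).mul (hf x hx)).congr_deriv (by ring)

lemma norm_mul_norm_integral_cexp_mul_le {z : ℂ} (hz : z.re = 0) {a b : ℝ} {A B : ℂ}
    (hab : a < b) {f f' : ℝ → ℂ} (hf : ∀ x ∈ Ioo a b, HasDerivAt f (f' x) x)
    (hf' : IntervalIntegrable f' volume a b)
    (hA : Tendsto f (𝓝[>] a) (𝓝 A)) (hB : Tendsto f (𝓝[<] b) (𝓝 B)) :
    ‖z‖ * ‖∫ x in a..b, Complex.exp (z * x) * f x‖ ≤
      ‖A‖ + ‖B‖ + ‖∫ x in a..b, Complex.exp (z * x) * f' x‖ := by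
  rw [← norm_mul, eq_sub_of_add_eq
    (integral_cexp_mul_add_integral_cexp_mul_deriv (z := z) hab hf hf' hA hB)]
  refine (norm_sub_le _ _).trans (add_le_add_left ((norm_sub_le _ _).trans_eq ?_) _)
  simp only [norm_mul, norm_cexp_mul_ofReal hz, one_mul, add_comm ‖A‖]

lemma norm_integral_le_of_eqOn_zero {E : Type*} [NormedAddCommGroup E] [NormedSpace ℝ E]
    {f : ℝ → E} {a b c B : ℝ} (hac : a < c) (hcb : c ≤ b) (h_zero : EqOn f 0 (Ioo a c))
    (h_bound : ∀ x ∈ Ico c b, ‖f x‖ ≤ B) : ‖∫ x in a..b, f x‖ ≤ B * (b - c) := by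
  have h_supp : ∫ x in a..b, f x = ∫ x in Ico c b, f x := by
    rw [intervalIntegral.integral_of_le (hac.le.trans hcb), integral_Ioc_eq_integral_Ioo]
    refine setIntegral_eq_of_subset_of_forall_sdiff_eq_zero measurableSet_Ioo
      (fun x hx => ⟨hac.trans_le hx.1, hx.2⟩) fun x hx => ?_
    exact h_zero ⟨hx.1.1, not_le.1 fun hcx => hx.2 ⟨hcx, hx.1.2⟩⟩
  rw [h_supp, ← Real.volume_real_Ico_of_le hcb]
  exact norm_setIntegral_le_of_norm_le_const measure_Ico_lt_top h_bound

lemma summable_one_add_sq_rpow_int {p : ℝ} (hp : p < -1 / 2) :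
    Summable fun k : ℤ => (1 + (k : ℝ) ^ 2) ^ p := by
  refine Summable.of_norm_bounded_eventually
    (Real.summable_abs_int_rpow (b := -(2 * p)) (by linarith)) ?_
  filter_upwards [(finite_singleton (0 : ℤ)).compl_mem_cofinite] with k hk
  have hk : 0 < |(k : ℝ)| := abs_pos.2 (Int.cast_ne_zero.2 hk)
  rw [Real.norm_of_nonneg (by positivity), neg_neg, Real.rpow_mul hk.le, Real.rpow_two, sq_abs]
  exact Real.rpow_le_rpow_of_nonpos (sq_abs (k : ℝ) ▸ pow_pos hk 2) (by linarith) (by linarith)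

lemma one_add_sq_pow_le (m : ℕ) (x : ℝ) :
    (1 + x ^ 2) ^ m ≤ 2 ^ m * (1 + |x| ^ m) ^ 2 := by
  calc (1 + x ^ 2) ^ m ≤ 2 ^ (m - 1) * (1 ^ m + (x ^ 2) ^ m) :=
        add_pow_le zero_le_one (sq_nonneg x) m
    _ ≤ 2 ^ m * (1 + (x ^ 2) ^ m) := by
        rw [one_pow]
        gcongr
        exacts [one_le_two, m.sub_le 1]
    _ ≤ 2 ^ m * (1 + |x| ^ m) ^ 2 := by
        rw [← sq_abs, pow_right_comm]
        gcongr
        nlinarith [pow_nonneg (abs_nonneg x) m]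

lemma one_add_sq_rpow_mul_sq_le {s K x y : ℝ} {m : ℕ} (hy : 0 ≤ y) (h : (1 + |x| ^ m) * y ≤ K) :
    (1 + x ^ 2) ^ s * y ^ 2 ≤ 2 ^ m * K ^ 2 * (1 + x ^ 2) ^ (s - m) := by
  have hx : 0 < 1 + x ^ 2 := by positivity
  calc (1 + x ^ 2) ^ s * y ^ 2
      = (1 + x ^ 2) ^ m * y ^ 2 * (1 + x ^ 2) ^ (s - m) := by
        rw [Real.rpow_sub_natCast hx.ne']
        field_simp
    _ ≤ 2 ^ m * (1 + |x| ^ m) ^ 2 * y ^ 2 * (1 + x ^ 2) ^ (s - m) := by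
        gcongr
        exact one_add_sq_pow_le m x
    _ = 2 ^ m * ((1 + |x| ^ m) * y) ^ 2 * (1 + x ^ 2) ^ (s - m) := by ring
    _ ≤ 2 ^ m * K ^ 2 * (1 + x ^ 2) ^ (s - m) := by gcongr

lemma tendsto_tsum_sobolev_of_decay {ι E : Type*} [SeminormedAddCommGroup E] {l : Filter ι}
    {c : ι → ℤ → E} {K s : ℝ} {m : ℕ} (hs : s + 1 / 2 < m)
    (h_lim : ∀ k, Tendsto (c · k) l (𝓝 0))
    (h_decay : ∀ᶠ i in l, ∀ k : ℤ, (1 + |(k : ℝ)| ^ m) * ‖c i k‖ ≤ K) :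
    Tendsto (fun i => ∑' k : ℤ, ENNReal.ofReal ((1 + (k : ℝ) ^ 2) ^ s * ‖c i k‖ ^ 2)) l (𝓝 0) := by
  have h_summable : Summable fun k : ℤ => 2 ^ m * K ^ 2 * (1 + (k : ℝ) ^ 2) ^ (s - m) :=
    (summable_one_add_sq_rpow_int (by linarith)).mul_left _
  have h_bound : ∀ᶠ i in l, ∀ k : ℤ, ‖(1 + (k : ℝ) ^ 2) ^ s * ‖c i k‖ ^ 2‖ ≤
      2 ^ m * K ^ 2 * (1 + (k : ℝ) ^ 2) ^ (s - m) := by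
    filter_upwards [h_decay] with i hi k
    rw [Real.norm_of_nonneg (by positivity)]
    exact one_add_sq_rpow_mul_sq_le (norm_nonneg _) (hi k)
  have h_real : Tendsto (fun i => ∑' k : ℤ, (1 + (k : ℝ) ^ 2) ^ s * ‖c i k‖ ^ 2) l (𝓝 0) := by
    simpa using tendsto_tsum_of_dominated_convergence h_summable
      (fun k => ((h_lim k).norm.pow 2).const_mul ((1 + (k : ℝ) ^ 2) ^ s)) h_bound
  rw [← ENNReal.ofReal_zero]
  refine (ENNReal.tendsto_ofReal h_real).congr' ?_
  filter_upwards [h_bound] with i hi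
  exact ENNReal.ofReal_tsum_of_nonneg (fun k => by positivity) (h_summable.of_norm_bounded hi)

section IteratedDeriv

variable {E : Type*} [NormedAddCommGroup E] [NormedSpace ℝ E] {f : ℝ → E} {s : Set ℝ}
  {n : WithTop ℕ∞} {j : ℕ} {x : ℝ}

lemma continuousOn_iteratedDeriv_of_isOpen (hf : ContDiffOn ℝ n f s) (hs : IsOpen s)
    (hj : j ≤ n) : ContinuousOn (iteratedDeriv j f) s :=
  (hf.continuousOn_iteratedDerivWithin hj hs.uniqueDiffOn).congr
    (iteratedDerivWithin_of_isOpen hs).symm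

lemma hasDerivAt_iteratedDeriv_of_isOpen (hf : ContDiffOn ℝ n f s) (hs : IsOpen s)
    (hj : j < n) (hx : x ∈ s) :
    HasDerivAt (iteratedDeriv j f) (iteratedDeriv (j + 1) f x) x := by
  have h_diff : DifferentiableAt ℝ (iteratedDeriv j f) x :=
    ((hf.differentiableOn_iteratedDerivWithin hj hs.uniqueDiffOn).congr
      (iteratedDerivWithin_of_isOpen hs).symm).differentiableAt (hs.mem_nhds hx)
  rw [iteratedDeriv_succ]
  exact h_diff.hasDerivAt

lemma tendsto_iteratedDeriv_nhdsWithin {g : ℝ → E} (hs : IsOpen s) (hg : ContDiff ℝ n g)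
    (hj : j ≤ n) (hfg : f =ᶠ[𝓝[s] x] g) :
    Tendsto (iteratedDeriv j f) (𝓝[s] x) (𝓝 (iteratedDeriv j g x)) := by
  have h_eq : iteratedDeriv j g =ᶠ[𝓝[s] x] iteratedDeriv j f := by
    filter_upwards [eventually_eventually_nhdsWithin.2 hfg, self_mem_nhdsWithin] with y hy hys
    have hy : f =ᶠ[𝓝 y] g := by rwa [hs.nhdsWithin_eq hys] at hy
    exact (hy.iteratedDeriv_eq j).symm
  exact (((hg.continuous_iteratedDeriv j hj).tendsto x).mono_left nhdsWithin_le_nhds).congr' h_eq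

lemma iteratedDeriv_eqOn_zero_of_eqOn_const {c : E} (hs : IsOpen s) (hj : j ≠ 0)
    (hf : EqOn f (fun _ => c) s) : EqOn (iteratedDeriv j f) 0 s := by
  intro x hx
  simpa [iteratedDeriv_const, hj] using hf.iteratedDeriv_of_isOpen hs j hx

end IteratedDeriv

lemma norm_pow_mul_norm_integral_cexp_mul_le {z : ℂ} (hz : z.re = 0) {a b : ℝ} (hab : a < b)
    {f : ℝ → ℝ} {A B : ℕ → ℝ} {n : ℕ} (hf : ContDiffOn ℝ n f (Ioo a b))
    (hA : ∀ j ≤ n, Tendsto (iteratedDeriv j f) (𝓝[>] a) (𝓝 (A j)))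
    (hB : ∀ j ≤ n, Tendsto (iteratedDeriv j f) (𝓝[<] b) (𝓝 (B j))) :
    ‖z‖ ^ n * ‖∫ x in a..b, Complex.exp (z * x) * f x‖ ≤
      ∑ j ∈ Finset.range n, ‖z‖ ^ (n - 1 - j) * (|A j| + |B j|) +
        ‖∫ x in a..b, Complex.exp (z * x) * iteratedDeriv n f x‖ := by
  induction n with
  | zero => simp
  | succ n ih =>
    have h_cont : ContinuousOn (iteratedDeriv (n + 1) f) (Ioo a b) :=
      continuousOn_iteratedDeriv_of_isOpen hf isOpen_Ioo le_rfl
    have h_int := intervalIntegrable_of_continuousOn_Ioo_of_tendsto hab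
      (Complex.continuous_ofReal.comp_continuousOn h_cont)
      (hA (n + 1) le_rfl).ofReal (hB (n + 1) le_rfl).ofReal
    have h_step := norm_mul_norm_integral_cexp_mul_le hz hab
      (fun x hx => (hasDerivAt_iteratedDeriv_of_isOpen (j := n) hf isOpen_Ioo
        (mod_cast n.lt_succ_self) hx).ofReal_comp)
      h_int (hA n n.le_succ).ofReal (hB n n.le_succ).ofReal
    have h_ih := ih (hf.of_le (mod_cast n.le_succ)) (fun j hj => hA j (hj.trans n.le_succ))
      (fun j hj => hB j (hj.trans n.le_succ))
    have h_sum : ∑ j ∈ Finset.range (n + 1), ‖z‖ ^ (n + 1 - 1 - j) * (|A j| + |B j|) =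
        ‖z‖ * ∑ j ∈ Finset.range n, ‖z‖ ^ (n - 1 - j) * (|A j| + |B j|) + (|A n| + |B n|) := by
      rw [Finset.sum_range_succ, Finset.mul_sum]
      congr 1
      · refine Finset.sum_congr rfl fun j hj => ?_
        rw [← mul_assoc, ← pow_succ']
        have := Finset.mem_range.1 hj
        congr 2
        lia
      · simp
    simp only [Complex.norm_real, Real.norm_eq_abs] at h_step
    rw [h_sum, pow_succ', mul_assoc]
    nlinarith [mul_le_mul_of_nonneg_left h_ih (norm_nonneg z)]

lemma exists_norm_le_of_continuous_of_eqOn_const {E : Type*} [SeminormedAddCommGroup E]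
    {f : ℝ → E} {a b : ℝ} {c d : E} (hf : Continuous f) (h_left : EqOn f (fun _ => c) (Iio a))
    (h_right : EqOn f (fun _ => d) (Ioi b)) : ∃ M, ∀ t, ‖f t‖ ≤ M := by
  have h_bdd := ((isCompact_Icc (a := a) (b := b)).image hf).isBounded.union
    ((finite_singleton d).insert c).isBounded
  obtain ⟨M, hM⟩ := h_bdd.exists_norm_le
  refine ⟨M, fun t => hM _ ?_⟩
  rcases lt_or_ge t a with hta | hta
  · exact .inr (.inl (h_left hta))
  rcases lt_or_ge b t with htb | htb
  · exact .inr (.inr (h_right htb))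
  · exact .inl (mem_image_of_mem f ⟨hta, htb⟩)

section TanHalf

variable {x y θ : ℝ}

lemma cos_half_ne_zero (hθ : θ ∈ Ioo (-π) π) : Real.cos (θ / 2) ≠ 0 :=
  (Real.cos_pos_of_mem_Ioo ⟨by linarith [hθ.1], by linarith [hθ.2]⟩).ne'

lemma one_add_cos_mul_one_add_tan_half_sq (hθ : θ ∈ Ioo (-π) π) :
    (1 + Real.cos θ) * (1 + Real.tan (θ / 2) ^ 2) = 2 := by
  have h_cos : Real.cos θ = 2 * Real.cos (θ / 2) ^ 2 - 1 := by
    rw [← Real.cos_two_mul, mul_div_cancel₀ θ two_ne_zero]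
  rw [h_cos, ← Real.inv_one_add_tan_sq (cos_half_ne_zero hθ)]
  have : 1 + Real.tan (θ / 2) ^ 2 ≠ 0 := by positivity
  field_simp
  ring

lemma sin_mul_one_add_tan_half_sq (θ : ℝ) :
    Real.sin θ * (1 + Real.tan (θ / 2) ^ 2) = 2 * Real.tan (θ / 2) := by
  rw [Real.sin_eq_two_mul_tan_half_div_one_add_tan_half_sq]
  field_simp

lemma hasDerivAt_tan_half (hθ : θ ∈ Ioo (-π) π) :
    HasDerivAt (fun θ => Real.tan (θ / 2)) ((1 + Real.tan (θ / 2) ^ 2) / 2) θ := by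
  refine ((Real.hasDerivAt_tan (cos_half_ne_zero hθ)).comp θ
    ((hasDerivAt_id θ).div_const 2)).congr_deriv ?_
  rw [one_div, ← Real.inv_one_add_tan_sq (cos_half_ne_zero hθ), inv_inv]
  ring

lemma tan_half_lt_iff (hθ : θ ∈ Ioo (-π) π) : Real.tan (θ / 2) < x ↔ θ < 2 * Real.arctan x := by
  rw [← Real.arctan_lt_arctan_iff, Real.arctan_tan (by linarith [hθ.1]) (by linarith [hθ.2]),
    div_lt_iff₀' two_pos]

lemma lt_tan_half_iff (hθ : θ ∈ Ioo (-π) π) : x < Real.tan (θ / 2) ↔ 2 * Real.arctan x < θ := by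
  rw [← Real.arctan_lt_arctan_iff, Real.arctan_tan (by linarith [hθ.1]) (by linarith [hθ.2]),
    lt_div_iff₀' two_pos]

lemma two_arctan_mem_Ioo (x : ℝ) : 2 * Real.arctan x ∈ Ioo (-π) π :=
  ⟨by linarith [Real.neg_pi_div_two_lt_arctan x], by linarith [Real.arctan_lt_pi_div_two x]⟩

lemma pi_sub_two_arctan_le (hx : 0 < x) : π - 2 * Real.arctan x ≤ 2 / x := by
  have h_le : Real.arctan x⁻¹ ≤ x⁻¹ := by
    simpa only [Real.tan_arctan] using Real.le_tan
      (Real.arctan_nonneg.2 (inv_nonneg.2 hx.le)) (Real.arctan_lt_pi_div_two x⁻¹)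
  rw [Real.arctan_inv_of_pos hx] at h_le
  rw [div_eq_mul_inv]
  linarith

end TanHalf

/-- The vector field `φ(t / N) d/dt` on the line, carried to the circle by `t = tan (θ / 2)`: as
`dθ/dt = 1 + cos θ`, it has `d/dθ`-coefficient `(1 + cos θ) φ(tan (θ / 2) / N)`. -/
noncomputable def cutoffField (φ : ℝ → ℝ) (N θ : ℝ) : ℝ :=
  (1 + Real.cos θ) * φ (Real.tan (θ / 2) / N)

section CutoffField

variable {φ : ℝ → ℝ} {N θ : ℝ}

lemma contDiffOn_cutoffField {n : WithTop ℕ∞} (hφ : ContDiff ℝ n φ) :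
    ContDiffOn ℝ n (cutoffField φ N) (Ioo (-π) π) := by
  intro θ hθ
  have h_half : ContDiffAt ℝ n (fun θ : ℝ => θ / 2) θ := contDiffAt_id.div_const 2
  have h_tan : ContDiffAt ℝ n (fun θ => Real.tan (θ / 2)) θ :=
    ContDiffAt.comp (g := Real.tan) θ (Real.contDiffAt_tan.2 (cos_half_ne_zero hθ)) h_half
  exact ((contDiffAt_const.add Real.contDiff_cos.contDiffAt).mul
    (hφ.contDiffAt.comp θ (h_tan.div_const N))).contDiffWithinAt

lemma hasDerivAt_comp_tan_half_div {ψ : ℝ → ℝ} {ψ' : ℝ} (hθ : θ ∈ Ioo (-π) π)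
    (hψ : HasDerivAt ψ ψ' (Real.tan (θ / 2) / N)) :
    HasDerivAt (fun θ => ψ (Real.tan (θ / 2) / N))
      (ψ' * ((1 + Real.tan (θ / 2) ^ 2) / 2 / N)) θ :=
  hψ.comp θ ((hasDerivAt_tan_half hθ).div_const N)

lemma iteratedDeriv_one_cutoffField (hφ : ContDiff ℝ 1 φ) :
    EqOn (iteratedDeriv 1 (cutoffField φ N))
      (fun θ => -Real.sin θ * φ (Real.tan (θ / 2) / N) +
        iteratedDeriv 1 φ (Real.tan (θ / 2) / N) / N) (Ioo (-π) π) := by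
  intro θ hθ
  rw [iteratedDeriv_one, iteratedDeriv_one]
  have h_comp := hasDerivAt_comp_tan_half_div (N := N) hθ
    ((hφ.differentiable one_ne_zero).differentiableAt.hasDerivAt)
  refine ((((Real.hasDerivAt_cos θ).const_add 1).mul h_comp).congr_deriv ?_).deriv
  linear_combination (deriv φ (Real.tan (θ / 2) / N) / (2 * N)) *
    one_add_cos_mul_one_add_tan_half_sq hθ

lemma iteratedDeriv_two_cutoffField (hφ : ContDiff ℝ 2 φ) :
    EqOn (iteratedDeriv 2 (cutoffField φ N))
      (fun θ => -Real.cos θ * φ (Real.tan (θ / 2) / N) -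
        Real.tan (θ / 2) / N * iteratedDeriv 1 φ (Real.tan (θ / 2) / N) +
        (1 + Real.tan (θ / 2) ^ 2) / (2 * N ^ 2) * iteratedDeriv 2 φ (Real.tan (θ / 2) / N))
      (Ioo (-π) π) := by
  intro θ hθ
  have h_comp (j : ℕ) (hj : j < 2) := hasDerivAt_comp_tan_half_div (N := N) hθ
    (hasDerivAt_iteratedDeriv_of_isOpen hφ.contDiffOn isOpen_univ
      (Nat.cast_lt (α := WithTop ℕ∞).2 hj) (mem_univ _))
  have h_one := h_comp 1 one_lt_two
  have h_zero := h_comp 0 two_pos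
  rw [iteratedDeriv_zero] at h_zero
  rw [iteratedDeriv_succ, ((iteratedDeriv_one_cutoffField (hφ.of_le one_le_two)).deriv
    isOpen_Ioo) hθ]
  refine ((((Real.hasDerivAt_sin θ).neg.mul h_zero).add
    (h_one.div_const N)).congr_deriv ?_).deriv
  simp only [Pi.neg_apply]
  linear_combination (-iteratedDeriv 1 φ (Real.tan (θ / 2) / N) / (2 * N)) *
    sin_mul_one_add_tan_half_sq θ

/-- Bol's lemma: `∂³ + ∂` on the circle corresponds to `d³/dt³` on the line, which is why all
derivatives of `φ` of intermediate order cancel. -/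
lemma iteratedDeriv_three_add_iteratedDeriv_one_cutoffField (hφ : ContDiff ℝ 3 φ)
    (hθ : θ ∈ Ioo (-π) π) :
    iteratedDeriv 3 (cutoffField φ N) θ + iteratedDeriv 1 (cutoffField φ N) θ =
      (1 + Real.tan (θ / 2) ^ 2) ^ 2 / (4 * N ^ 3) *
        iteratedDeriv 3 φ (Real.tan (θ / 2) / N) := by
  have h_comp (j : ℕ) (hj : j < 3) := hasDerivAt_comp_tan_half_div (N := N) hθ
    (hasDerivAt_iteratedDeriv_of_isOpen hφ.contDiffOn isOpen_univ
      (Nat.cast_lt (α := WithTop ℕ∞).2 hj) (mem_univ _))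
  have h_tan := hasDerivAt_tan_half hθ
  have h_zero := h_comp 0 three_pos
  rw [iteratedDeriv_zero] at h_zero
  have h_three : HasDerivAt _ _ θ := (((Real.hasDerivAt_cos θ).neg.mul h_zero).sub
    ((h_tan.div_const N).mul (h_comp 1 (by norm_num)))).add
    ((((h_tan.pow 2).const_add 1).div_const (2 * N ^ 2)).mul (h_comp 2 (by norm_num)))
  rw [iteratedDeriv_succ, ((iteratedDeriv_two_cutoffField (hφ.of_le (by norm_num))).deriv
    isOpen_Ioo) hθ, iteratedDeriv_one_cutoffField (hφ.of_le (by norm_num)) hθ]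
  refine (congrArg (· + _) h_three.deriv).trans ?_
  simp only [Pi.neg_apply, Pi.pow_apply]
  push_cast
  linear_combination (-iteratedDeriv 1 φ (Real.tan (θ / 2) / N) / (2 * N)) *
    one_add_cos_mul_one_add_tan_half_sq hθ

lemma cutoffField_eqOn_zero {a : ℝ} (hN : 0 < N) (h_left : EqOn φ 0 (Iio a)) :
    EqOn (cutoffField φ N) 0 (Ioo (-π) (2 * Real.arctan (a * N))) := by
  intro θ hθ
  have h_tan : Real.tan (θ / 2) < a * N :=
    (tan_half_lt_iff ⟨hθ.1, hθ.2.trans (two_arctan_mem_Ioo _).2⟩).2 hθ.2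
  simp [cutoffField, h_left (mem_Iio.2 ((div_lt_iff₀ hN).2 h_tan))]

lemma cutoffField_eqOn_mul_one_add_cos {b c : ℝ} (hN : 0 < N)
    (h_right : EqOn φ (fun _ => c) (Ioi b)) :
    EqOn (cutoffField φ N) (fun θ => (1 + Real.cos θ) * c)
      (Ioo (2 * Real.arctan (b * N)) π) := by
  intro θ hθ
  have h_tan : b * N < Real.tan (θ / 2) :=
    (lt_tan_half_iff ⟨(two_arctan_mem_Ioo _).1.trans hθ.1, hθ.2⟩).2 hθ.1
  simp only [cutoffField, h_right (mem_Ioi.2 ((lt_div_iff₀ hN).2 h_tan))]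

lemma tendsto_iteratedDeriv_cutoffField_neg_pi {a : ℝ} (hN : 0 < N)
    (h_left : EqOn φ 0 (Iio a)) (j : ℕ) :
    Tendsto (iteratedDeriv j (cutoffField φ N)) (𝓝[>] (-π)) (𝓝 0) := by
  have h_zero : cutoffField φ N =ᶠ[𝓝[>] (-π)] fun _ => 0 := by
    filter_upwards [Ioo_mem_nhdsGT (two_arctan_mem_Ioo (a * N)).1] with θ hθ
    exact cutoffField_eqOn_zero hN h_left hθ
  simpa [iteratedDeriv_const] using
    tendsto_iteratedDeriv_nhdsWithin isOpen_Ioi contDiff_const (le_refl (j : WithTop ℕ∞)) h_zero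

lemma tendsto_iteratedDeriv_cutoffField_pi {b c : ℝ} (hN : 0 < N)
    (h_right : EqOn φ (fun _ => c) (Ioi b)) (j : ℕ) :
    Tendsto (iteratedDeriv j (cutoffField φ N)) (𝓝[<] π)
      (𝓝 (iteratedDeriv j (fun θ => (1 + Real.cos θ) * c) π)) := by
  refine tendsto_iteratedDeriv_nhdsWithin isOpen_Iio (n := j)
    ((contDiff_const.add Real.contDiff_cos).mul contDiff_const) le_rfl ?_
  filter_upwards [Ioo_mem_nhdsLT (two_arctan_mem_Ioo (b * N)).2] with θ hθ
  exact cutoffField_eqOn_mul_one_add_cos hN h_right hθ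

lemma norm_integral_cexp_mul_le_of_eqOn_zero {z : ℂ} (hz : z.re = 0) {f : ℝ → ℝ} {x B : ℝ}
    (hx : 0 < x) (h_zero : EqOn f 0 (Ioo (-π) (2 * Real.arctan x)))
    (h_bound : ∀ θ ∈ Ioo (-π) π, |f θ| ≤ B) :
    ‖∫ θ in -π..π, Complex.exp (z * θ) * f θ‖ ≤ B * (2 / x) := by
  have hx_mem := two_arctan_mem_Ioo x
  have h_int : ‖∫ θ in -π..π, Complex.exp (z * θ) * f θ‖ ≤ B * (π - 2 * Real.arctan x) := by
    refine norm_integral_le_of_eqOn_zero hx_mem.1 hx_mem.2.le (fun θ hθ => ?_) fun θ hθ => ?_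
    · simp [h_zero hθ]
    · rw [norm_mul, norm_cexp_mul_ofReal hz, one_mul, Complex.norm_real]
      exact h_bound θ ⟨hx_mem.1.trans_le hθ.1, hθ.2⟩
  have hB : 0 ≤ B := (abs_nonneg _).trans (h_bound _ hx_mem)
  exact h_int.trans (mul_le_mul_of_nonneg_left (pi_sub_two_arctan_le hx) hB)

lemma abs_cutoffField_le {M : ℝ} (hM : ∀ t, |φ t| ≤ M) (θ : ℝ) : |cutoffField φ N θ| ≤ 2 * M := by
  rw [cutoffField, abs_mul]
  refine mul_le_mul ?_ (hM _) (abs_nonneg _) zero_le_two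
  rw [abs_of_nonneg] <;> linarith [Real.neg_one_le_cos θ, Real.cos_le_one θ]

lemma one_add_sq_sq_div_le (hN : 1 ≤ N) (t : ℝ) :
    (1 + t ^ 2) ^ 2 / (4 * N ^ 3) ≤ N * (1 + (t / N) ^ 2) ^ 2 := by
  have hN₀ : 0 < N := one_pos.trans_le hN
  have h_sq : 1 + t ^ 2 ≤ N ^ 2 * (1 + (t / N) ^ 2) := by
    rw [mul_add, ← mul_pow, mul_div_cancel₀ t hN₀.ne']
    nlinarith
  rw [div_le_iff₀ (by positivity)]
  calc (1 + t ^ 2) ^ 2 ≤ (N ^ 2 * (1 + (t / N) ^ 2)) ^ 2 := by gcongr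
    _ ≤ 4 * (N ^ 2 * (1 + (t / N) ^ 2)) ^ 2 := le_mul_of_one_le_left (sq_nonneg _) (by norm_num)
    _ = N * (1 + (t / N) ^ 2) ^ 2 * (4 * N ^ 3) := by ring

lemma abs_iteratedDeriv_three_cutoffField_le {M₀ M₁ M₃ : ℝ} (hφ : ContDiff ℝ 3 φ)
    (hM₀ : ∀ t, |φ t| ≤ M₀) (hM₁ : ∀ t, |iteratedDeriv 1 φ t| ≤ M₁)
    (hM₃ : ∀ t, |(1 + t ^ 2) ^ 2 * iteratedDeriv 3 φ t| ≤ M₃) (hN : 1 ≤ N)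
    (hθ : θ ∈ Ioo (-π) π) :
    |iteratedDeriv 3 (cutoffField φ N) θ| ≤ (M₀ + M₁ + M₃) * N := by
  have hN₀ : 0 < N := one_pos.trans_le hN
  set t := Real.tan (θ / 2)
  have h_one : |iteratedDeriv 1 (cutoffField φ N) θ| ≤ M₀ + M₁ := by
    rw [iteratedDeriv_one_cutoffField (hφ.of_le (by norm_num)) hθ]
    refine (abs_add_le _ _).trans (add_le_add ?_ ?_)
    · rw [abs_mul, abs_neg]
      exact (mul_le_of_le_one_left (abs_nonneg _) (Real.abs_sin_le_one θ)).trans (hM₀ _)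
    · rw [abs_div, abs_of_pos hN₀]
      exact (div_le_self (abs_nonneg _) hN).trans (hM₁ _)
  have h_bol : |iteratedDeriv 3 (cutoffField φ N) θ + iteratedDeriv 1 (cutoffField φ N) θ| ≤
      N * M₃ := by
    rw [iteratedDeriv_three_add_iteratedDeriv_one_cutoffField hφ hθ, abs_mul,
      abs_of_nonneg (by positivity)]
    refine (mul_le_mul_of_nonneg_right (one_add_sq_sq_div_le hN t) (abs_nonneg _)).trans ?_
    have h_three := hM₃ (t / N)
    rw [abs_mul, abs_of_nonneg (sq_nonneg _)] at h_three
    exact (mul_assoc _ _ _).trans_le (mul_le_mul_of_nonneg_left h_three hN₀.le)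
  have h_tri := abs_sub (iteratedDeriv 3 (cutoffField φ N) θ +
    iteratedDeriv 1 (cutoffField φ N) θ) (iteratedDeriv 1 (cutoffField φ N) θ)
  rw [add_sub_cancel_right] at h_tri
  nlinarith [(abs_nonneg _).trans h_one]

end CutoffField

section FourierDecay

variable {φ : ℝ → ℝ} {a b c : ℝ}

lemma exists_norm_integral_cutoffField_le_div (hφ : Continuous φ) (ha : 0 < a)
    (h_left : EqOn φ 0 (Iio a)) (h_right : EqOn φ (fun _ => c) (Ioi b)) :
    ∃ K, ∀ N > 0, ∀ z : ℂ, z.re = 0 →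
      ‖∫ θ in -π..π, Complex.exp (z * θ) * cutoffField φ N θ‖ ≤ K / N := by
  obtain ⟨M, hM⟩ := exists_norm_le_of_continuous_of_eqOn_const hφ h_left h_right
  refine ⟨2 * M * (2 / a), fun N hN z hz => ?_⟩
  rw [mul_div_assoc, div_div]
  exact norm_integral_cexp_mul_le_of_eqOn_zero hz (mul_pos ha hN)
    (cutoffField_eqOn_zero hN h_left) fun θ _ => abs_cutoffField_le hM θ

lemma exists_abs_iteratedDeriv_three_cutoffField_le (hφ : ContDiff ℝ 3 φ)
    (h_left : EqOn φ 0 (Iio a)) (h_right : EqOn φ (fun _ => c) (Ioi b)) :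
    ∃ M, ∀ N ≥ 1, ∀ θ ∈ Ioo (-π) π, |iteratedDeriv 3 (cutoffField φ N) θ| ≤ M * N := by
  have h_deriv_left {j : ℕ} (hj : j ≠ 0) : EqOn (iteratedDeriv j φ) 0 (Iio a) :=
    iteratedDeriv_eqOn_zero_of_eqOn_const isOpen_Iio hj h_left
  have h_deriv_right {j : ℕ} (hj : j ≠ 0) : EqOn (iteratedDeriv j φ) 0 (Ioi b) :=
    iteratedDeriv_eqOn_zero_of_eqOn_const isOpen_Ioi hj h_right
  obtain ⟨M₀, hM₀⟩ := exists_norm_le_of_continuous_of_eqOn_const hφ.continuous h_left h_right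
  obtain ⟨M₁, hM₁⟩ := exists_norm_le_of_continuous_of_eqOn_const
    (hφ.continuous_iteratedDeriv 1 (by norm_num)) (h_deriv_left one_ne_zero)
    (h_deriv_right one_ne_zero)
  obtain ⟨M₃, hM₃⟩ := exists_norm_le_of_continuous_of_eqOn_const (a := a) (b := b)
    (c := (0 : ℝ)) (d := 0) (f := fun t => (1 + t ^ 2) ^ 2 * iteratedDeriv 3 φ t)
    (Continuous.mul (by fun_prop) (hφ.continuous_iteratedDeriv 3 le_rfl))
    (fun t ht => by simp [h_deriv_left three_ne_zero ht])
    (fun t ht => by simp [h_deriv_right three_ne_zero ht])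
  exact ⟨M₀ + M₁ + M₃, fun N hN θ hθ =>
    abs_iteratedDeriv_three_cutoffField_le hφ hM₀ hM₁ hM₃ hN hθ⟩

lemma exists_norm_pow_three_mul_norm_integral_cutoffField_le (hφ : ContDiff ℝ 3 φ) (ha : 0 < a)
    (h_left : EqOn φ 0 (Iio a)) (h_right : EqOn φ (fun _ => c) (Ioi b)) :
    ∃ K, ∀ N ≥ 1, ∀ z : ℂ, z.re = 0 →
      ‖z‖ ^ 3 * ‖∫ θ in -π..π, Complex.exp (z * θ) * cutoffField φ N θ‖ ≤ K := by
  obtain ⟨M, hM⟩ := exists_abs_iteratedDeriv_three_cutoffField_le hφ h_left h_right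
  refine ⟨|c| + M * (2 / a), fun N hN z hz => ?_⟩
  have hN₀ : 0 < N := one_pos.trans_le hN
  have h_parts := norm_pow_mul_norm_integral_cexp_mul_le (n := 3) hz
    (neg_lt_self Real.pi_pos) (contDiffOn_cutoffField hφ)
    (fun j _ => tendsto_iteratedDeriv_cutoffField_neg_pi hN₀ h_left j)
    (fun j _ => tendsto_iteratedDeriv_cutoffField_pi hN₀ h_right j)
  have h_boundary : ∑ j ∈ Finset.range 3, ‖z‖ ^ (3 - 1 - j) *
      (|0| + |iteratedDeriv j (fun θ => (1 + Real.cos θ) * c) π|) = |c| := by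
    simp [Finset.sum_range_succ, iteratedDeriv_succ]
  have h_third : ‖∫ θ in -π..π, Complex.exp (z * θ) * iteratedDeriv 3 (cutoffField φ N) θ‖ ≤
      M * (2 / a) := by
    refine (norm_integral_cexp_mul_le_of_eqOn_zero hz (mul_pos ha hN₀)
      (iteratedDeriv_eqOn_zero_of_eqOn_const isOpen_Ioo three_ne_zero
        (cutoffField_eqOn_zero hN₀ h_left)) (hM N hN)).trans_eq ?_
    field_simp
  rw [h_boundary] at h_parts
  exact h_parts.trans (by gcongr)

end FourierDecay

/-- The `k`-th Fourier coefficient of a `2π`-periodic function, with the normalisation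
`(1 / 2π) ∫₀^{2π} e^{-ikθ} f(θ) dθ`. -/
noncomputable def circleFourierCoeff (f : ℝ → ℝ) (k : ℤ) : ℂ :=
  (1 / (2 * π) : ℝ) * ∫ θ in (0 : ℝ)..(2 * π), Complex.exp (-Complex.I * k * θ) * f θ

lemma norm_circleFourierCoeff_le {f F : ℝ → ℝ} (hf : Function.Periodic f (2 * π))
    (h_eq : EqOn f F (Ioo (-π) π)) (k : ℤ) :
    ‖circleFourierCoeff f k‖ ≤ ‖∫ θ in -π..π, Complex.exp (-Complex.I * k * θ) * F θ‖ := by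
  have h_periodic : Function.Periodic
      (fun θ : ℝ => Complex.exp (-Complex.I * k * θ) * f θ) (2 * π) := by
    intro θ
    have h_exp : Complex.exp (-Complex.I * k * (θ + 2 * π : ℝ)) =
        Complex.exp (-Complex.I * k * θ) := by
      refine (Complex.exp_periodic.int_mul k _).symm.trans (congrArg _ ?_)
      push_cast
      ring
    simp only [h_exp, hf θ]
  have h_shift := h_periodic.intervalIntegral_add_eq 0 (-π)
  rw [zero_add, show -π + 2 * π = π by ring] at h_shift
  have h_congr := intervalIntegral.integral_congr_Ioo_of_le (μ := volume)
    (neg_le_self Real.pi_pos.le) fun θ hθ =>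
      congrArg (fun y : ℝ => Complex.exp (-Complex.I * k * θ) * y) (h_eq hθ)
  rw [circleFourierCoeff, h_shift, h_congr, norm_mul]
  refine mul_le_of_le_one_left (norm_nonneg _) ?_
  rw [Complex.norm_real, Real.norm_of_nonneg (by positivity), div_le_one (by positivity)]
  linarith [Real.two_le_pi]

theorem tendsto_sobolev_of_eqOn_cutoffField {ι : Type*} {l : Filter ι} {φ : ℝ → ℝ} {a b c s : ℝ}
    (hφ : ContDiff ℝ 3 φ) (ha : 0 < a) (h_left : EqOn φ 0 (Iio a))
    (h_right : EqOn φ (fun _ => c) (Ioi b)) (hs : s < 5 / 2) {N : ι → ℝ} (hN : Tendsto N l atTop)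
    {f : ι → ℝ → ℝ} (hf_per : ∀ᶠ i in l, Function.Periodic (f i) (2 * π))
    (hf_eq : ∀ᶠ i in l, EqOn (f i) (cutoffField φ (N i)) (Ioo (-π) π)) :
    Tendsto (fun i => ∑' k : ℤ,
      ENNReal.ofReal ((1 + (k : ℝ) ^ 2) ^ s * ‖circleFourierCoeff (f i) k‖ ^ 2)) l (𝓝 0) := by
  obtain ⟨K, hK⟩ := exists_norm_integral_cutoffField_le_div hφ.continuous ha h_left h_right
  obtain ⟨K₃, hK₃⟩ := exists_norm_pow_three_mul_norm_integral_cutoffField_le hφ ha h_left h_right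
  have h_re (k : ℤ) : (-Complex.I * k).re = 0 := by simp
  have h_coeff : ∀ᶠ i in l, ∀ k, ‖circleFourierCoeff (f i) k‖ ≤ K / N i := by
    filter_upwards [hf_per, hf_eq, hN.eventually_gt_atTop 0] with i hi_per hi_eq hi k
    exact (norm_circleFourierCoeff_le hi_per hi_eq k).trans (hK _ hi _ (h_re k))
  refine tendsto_tsum_sobolev_of_decay (m := 3) (K := |K| + K₃) (by norm_num; linarith)
    (fun k => ?_) ?_
  · exact squeeze_zero_norm' (h_coeff.mono fun i hi => hi k) (hN.const_div_atTop K)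
  · filter_upwards [h_coeff, hf_per, hf_eq, hN.eventually_ge_atTop 1]
      with i hi hi_per hi_eq hi_one k
    have h_one : ‖circleFourierCoeff (f i) k‖ ≤ |K| :=
      (hi k).trans <| (div_le_div_of_nonneg_right (le_abs_self K) (by linarith)).trans
        (div_le_self (abs_nonneg K) hi_one)
    have h_cube : |(k : ℝ)| ^ 3 * ‖circleFourierCoeff (f i) k‖ ≤ K₃ := by
      have h_three := hK₃ _ hi_one _ (h_re k)
      rw [norm_mul, norm_neg, Complex.norm_I, one_mul, Complex.norm_intCast] at h_three
      exact (mul_le_mul_of_nonneg_left (norm_circleFourierCoeff_le hi_per hi_eq k)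
        (by positivity)).trans h_three
    linarith

theorem stmt_8_general {h : ℝ → ℝ} (hsm : ContDiff ℝ 3 h) {a b : ℝ} (ha : 0 < a)
    (h_left : ∀ t < a, h t = 1) (h_right : ∀ t > b, h t = 0) {g : ℝ → ℝ}
    (hg : ∀ θ : ℝ, g θ = 1 + Real.cos θ) {gn : ℕ → ℝ → ℝ}
    (hgn_per : ∀ n : ℕ, 1 ≤ n → ∀ θ : ℝ, gn n (θ + 2 * π) = gn n θ)
    (hgn_eq : ∀ n : ℕ, 1 ≤ n → ∀ θ ∈ Ioo (-π) π,
      gn n θ = (1 + Real.cos θ) * h (Real.tan (θ / 2) / n)) {s : ℝ} (hs : s < 5 / 2) :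
    Tendsto (fun n : ℕ => ∑' k : ℤ, ENNReal.ofReal ((1 + (k : ℝ) ^ 2) ^ s *
      ‖circleFourierCoeff (fun θ => gn n θ - g θ) k‖ ^ 2)) atTop (𝓝 0) := by
  refine tendsto_sobolev_of_eqOn_cutoffField (φ := fun t => h t - 1) (b := b) (c := -1)
    (hsm.sub contDiff_const) ha (fun t ht => by simp [h_left t ht])
    (fun t ht => by simp [h_right t ht]) hs tendsto_natCast_atTop_atTop ?_ ?_
  · filter_upwards [eventually_ge_atTop 1] with n hn θ
    simp only [hgn_per n hn, hg, Real.cos_add_two_pi]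
  · filter_upwards [eventually_ge_atTop 1] with n hn θ hθ
    simp only [hgn_eq n hn θ hθ, hg, cutoffField]
    ring

/-- The cut-off translation fields `g_n(θ) = (1+cos θ)·h(tan(θ/2)/n)` converge to
`g(θ) = 1+cos θ` in `H^s` for `2 < s < 5/2` (convergence of the squared `H^s` norm
of the difference, expressed via Fourier coefficients, to `0`). -/
theorem stmt_8 (h : ℝ → ℝ) (hsm : ContDiff ℝ (⊤ : ℕ∞) h)
    (h1 : ∀ t : ℝ, t ≤ 1 → h t = 1) (h2 : ∀ t : ℝ, 2 ≤ t → h t = 0)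
    (g : ℝ → ℝ) (hg : ∀ θ : ℝ, g θ = 1 + Real.cos θ)
    (gn : ℕ → ℝ → ℝ)
    (hgn_per : ∀ n : ℕ, 1 ≤ n → ∀ θ : ℝ, gn n (θ + 2 * π) = gn n θ)
    (hgn_eq : ∀ n : ℕ, 1 ≤ n → ∀ θ ∈ Set.Ioo (-π) π,
      gn n θ = (1 + Real.cos θ) * h (Real.tan (θ / 2) / n))
    (hgn_pi : ∀ n : ℕ, 1 ≤ n → gn n π = 0) :
    ∀ s : ℝ, 2 < s → s < 5 / 2 →
      Filter.Tendsto
        (fun n : ℕ => ∑' k : ℤ,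
          ENNReal.ofReal ((1 + (k : ℝ) ^ 2) ^ s *
            ‖((1 / (2 * π) : ℝ) *
              ∫ θ in (0 : ℝ)..(2 * π),
                Complex.exp (-Complex.I * k * θ) * Complex.ofReal (gn n θ - g θ) : ℂ)‖ ^ 2))
        Filter.atTop (nhds 0) := by
  exact fun _ _ hs => stmt_8_general (contDiff_infty.1 hsm 3) one_pos
    (fun t ht => h1 t ht.le) (fun t ht => h2 t ht.le) hg hgn_per hgn_eq hs
end
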